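/- The automorphism group of every maximum partial triple system of order 17 has order at most 12, and there exists an MMPTS(17) whose automorphism group has order exactly 12. -/

import Mathlib

def isPTS {n : ℕ} (B : Finset (Finset (Fin n))) : Prop :=
  (∀ T ∈ B, T.card = 3) ∧
  ∀ p : Finset (Fin n), p.card = 2 → ∀ T₁ ∈ B, ∀ T₂ ∈ B, p ⊆ T₁ → p ⊆ T₂ → T₁ = T₂

def isMMPTS {n : ℕ} (B : Finset (Finset (Fin n))) : Prop :=
  isPTS B ∧ ∀ B' : Finset (Finset (Fin n)), isPTS B' → B'.card ≤ B.card

def isAuto {n : ℕ} (B : Finset (Finset (Fin n))) (φ : Equiv.Perm (Fin n)) : Prop :=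
  ∀ T ∈ B, T.image φ ∈ B

/-!
An MMPTS(17) has `44` triples, so its leave (the graph of uncovered pairs) has `4` edges. As all its
degrees are even, the leave is a 4-cycle, and every automorphism permutes it.

Complete each diagonal of the cycle to a triple. If the two third points differ, an automorphism
fixing the cycle pointwise fixes both of them, hence at least `9` points, whereas a nontrivial one
fixes at most `8`. So the group embeds in the symmetries of the cycle and has order at most `8`.

If both third points are the same point, the cycle and this point form a 5-point core. No
nontrivial automorphism fixes a triple disjoint from the core pointwise, so the group `G` acts
freely on the `72` ordered pairs of points in such triples, and `|G|` divides `72`. If `3 ∤ |G|`,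
then `|G| ≤ 8`. Otherwise let `τ` have order `3`. Counting the elements with trivial cube shows
that `⟨τ⟩` is the only subgroup of order `3`, so the centralizer `C` of `τ` has index at most `2`.
As `C` acts freely on the `12` points off the core, `|C| ≤ 6` unless `|C| = 12`. In that case the
triple through `z` and `τ z` forces `C` to be cyclic; labelling the outer points by the integers
modulo `12`, with `C` acting by translation, the third point of `0` and `2` is found to lie in the
core, but a core point, being fixed by all translations by multiples of `4`, cannot complete `0`
and `2` to a triple.
-/

/-! ### Free actions and elements of order three -/

section FreeActions

variable {G α : Type*}

theorem prime_dvd_card_of_iterate_eq (p : ℕ) [Fact p.Prime] {s : Finset α} {f : α → α}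
    (hmaps : Set.MapsTo f s s) (hiter : ∀ x ∈ s, f^[p] x = x) (hfix : ∀ x ∈ s, f x ≠ x) :
    p ∣ s.card := by
  classical
  let F : Function.End s := hmaps.restrict f s s
  have hF : F ^ p ^ 1 = 1 := by
    funext x
    rw [pow_one]
    change F^[p] x = x
    rw [hmaps.iterate_restrict]
    exact Subtype.ext (hiter x x.2)
  have hempty : IsEmpty (Function.fixedPoints F) :=
    ⟨fun x => hfix _ x.1.2 (congrArg Subtype.val x.2)⟩
  have hmod := Equiv.Perm.card_fixedPoints_modEq hF
  have hzero : Fintype.card (Function.fixedPoints F) = 0 := Fintype.card_eq_zero_iff.2 hempty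
  rw [Fintype.card_coe] at hmod
  exact Nat.modEq_zero_iff_dvd.1 (hzero ▸ hmod)

theorem exists_eq_of_commuting_involutions {s : Finset α} {f g : α → α}
    (hcard : ¬ 4 ∣ s.card) (hf : Set.MapsTo f s s) (hg : Set.MapsTo g s s)
    (hff : ∀ x ∈ s, f (f x) = x) (hgg : ∀ x ∈ s, g (g x) = x)
    (hfix : ∀ x ∈ s, f x ≠ x) (hgx : ∀ x ∈ s, g x ≠ x)
    (hcomm : ∀ x ∈ s, f (g x) = g (f x)) : ∃ x ∈ s, f x = g x := by
  classical
  by_contra! hne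
  have sign_eq (σ : Equiv.Perm s) (hσ : σ ^ 2 = 1) (hσx : ∀ x, σ x ≠ x) :
      Equiv.Perm.sign σ = (-1) ^ (s.card / 2) := by
    have hzero : Fintype.card (Function.fixedPoints σ) = 0 :=
      Fintype.card_eq_zero_iff.2 ⟨fun x => hσx x.1 x.2⟩
    rw [Equiv.Perm.sign_of_pow_two_eq_one hσ, hzero, Fintype.card_coe, Nat.sub_zero]
  have hF : Function.Involutive (hf.restrict f s s) := fun x => Subtype.ext (hff x x.2)
  have hG : Function.Involutive (hg.restrict g s s) := fun x => Subtype.ext (hgg x x.2)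
  let σ := hF.toPerm
  let τ := hG.toPerm
  have hσ : σ ^ 2 = 1 := by ext x; exact hff x x.2
  have hτ : τ ^ 2 = 1 := by ext x; exact hgg x x.2
  have hστ : Commute σ τ := by ext x; exact hcomm x x.2
  have hmul := sign_eq (σ * τ) (by rw [hστ.mul_pow, hσ, hτ, one_mul]) fun x hx =>
    hne x x.2 (by
      have h := congrArg (fun y => (σ y : α)) hx
      exact h.symm.trans (hff _ (hg x.2)))
  rw [map_mul, sign_eq σ hσ fun x hx => hfix x x.2 (congrArg Subtype.val hx),
    sign_eq τ hτ fun x hx => hgx x x.2 (congrArg Subtype.val hx), mul_eq_left] at hmul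
  have hhalf : Even (s.card / 2) := (neg_one_pow_eq_one_iff_even (by decide)).1 hmul
  have htwo : 2 ∣ s.card := prime_dvd_card_of_iterate_eq 2 hf hff hfix
  rw [even_iff_two_dvd] at hhalf
  omega

variable [Group G] [MulAction G α]

theorem card_dvd_card_of_free {s : Finset α} (hs : ∀ g : G, ∀ x ∈ s, g • x ∈ s)
    (hfree : ∀ g : G, ∀ x ∈ s, g • x = x → g = 1) : Nat.card G ∣ s.card := by
  let S : SubMulAction G α := ⟨s, fun g {x} hx => hs g x hx⟩
  have hstab (x : S) : MulAction.stabilizer G x = ⊥ :=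
    (Subgroup.eq_bot_iff_forall _).2 fun g hg => hfree g x x.2 (congrArg Subtype.val hg)
  have hcard := Nat.card_congr (MulAction.selfEquivOrbitsQuotientProd hstab)
  rw [Nat.card_prod] at hcard
  have hS : Nat.card S = s.card := Nat.card_eq_finsetCard s
  exact hS ▸ hcard ▸ dvd_mul_left _ _

theorem eq_one_of_smul_eq_of_prime_order [Finite G] {x : α}
    (h : ∀ g : G, (orderOf g).Prime → g • x ≠ x) {g : G} (hg : g • x = x) : g = 1 := by
  by_contra hne
  have hp := Nat.minFac_prime (mt orderOf_eq_one_iff.1 hne)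
  refine h (g ^ (orderOf g / (orderOf g).minFac)) ?_ ?_
  · rwa [orderOf_pow_orderOf_div (orderOf_pos g).ne' (Nat.minFac_dvd _)]
  · exact (MulAction.stabilizer G x).pow_mem hg _

end FreeActions

section OrderThree

variable {G : Type*} [Group G]

theorem mem_zpowers_iff_of_orderOf_eq_three {τ g : G} (hτ : orderOf τ = 3) :
    g ∈ Subgroup.zpowers τ ↔ g = 1 ∨ g = τ ∨ g = τ⁻¹ := by
  have hcube : τ ^ 3 = 1 := hτ ▸ pow_orderOf_eq_one τ
  classical
  constructor
  · intro hg
    obtain ⟨k, hk, rfl⟩ := (IsOfFinOrder.mem_zpowers_iff_mem_range_orderOf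
      (orderOf_pos_iff.1 (hτ ▸ three_pos))).1 hg |> Finset.mem_image.1
    rw [hτ, Finset.mem_range] at hk
    interval_cases k
    · exact .inl (pow_zero τ)
    · exact .inr (.inl (pow_one τ))
    · exact .inr (.inr (eq_inv_of_mul_eq_one_left (by rw [← pow_succ, hcube])))
  · rintro (rfl | rfl | rfl)
    exacts [one_mem _, Subgroup.mem_zpowers _, inv_mem (Subgroup.mem_zpowers τ)]

theorem normal_zpowers_of_mem_center {τ : G} (hτ : τ ∈ Subgroup.center G) :
    (Subgroup.zpowers τ).Normal :=
  ⟨fun n hn g => by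
    rwa [Subgroup.mem_center_iff.1 (Subgroup.zpowers_le.2 hτ hn) g, mul_inv_cancel_right]⟩

theorem mk_mem_center_centralizer (τ : G) :
    (⟨τ, Subgroup.mem_centralizer_singleton_iff.2 rfl⟩ : Subgroup.centralizer {τ}) ∈
      Subgroup.center (Subgroup.centralizer {τ}) :=
  Subgroup.mem_center_iff.2 fun g => Subtype.ext (Subgroup.mem_centralizer_singleton_iff.1 g.2)

theorem mem_of_pow_mem_of_coprime_index {N : Subgroup G} [N.Normal] {n : ℕ} {g : G}
    (hn : n.Coprime N.index) (hg : g ^ n ∈ N) : g ∈ N := by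
  rw [← QuotientGroup.eq_one_iff] at hg ⊢
  rw [QuotientGroup.mk_pow, ← orderOf_dvd_iff_pow_eq_one] at hg
  have hindex := orderOf_dvd_natCard (g : G ⧸ N)
  rw [← N.index_eq_card] at hindex
  exact orderOf_eq_one_iff.1 (Nat.eq_one_of_dvd_coprimes hn hg hindex)

theorem mem_zpowers_of_central_of_pow_three_mem {τ g : G} (hG : ¬ 9 ∣ Nat.card G)
    (hτ : orderOf τ = 3) (hcentral : τ ∈ Subgroup.center G)
    (hg : g ^ 3 ∈ Subgroup.zpowers τ) : g ∈ Subgroup.zpowers τ := by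
  have := normal_zpowers_of_mem_center hcentral
  refine mem_of_pow_mem_of_coprime_index ((Nat.prime_three.coprime_iff_not_dvd).2 fun h => hG ?_) hg
  rw [← (Subgroup.zpowers τ).index_mul_card, Nat.card_zpowers, hτ]
  exact mul_dvd_mul h dvd_rfl

theorem mem_zpowers_of_commute_of_pow_three_eq_one {σ τ : G} (hG : ¬ 9 ∣ Nat.card G)
    (hτ : orderOf τ = 3) (hσ : σ ^ 3 = 1) (hcomm : σ * τ = τ * σ) :
    σ ∈ Subgroup.zpowers τ := by
  let C := Subgroup.centralizer {τ}
  let σ' : C := ⟨σ, Subgroup.mem_centralizer_singleton_iff.2 hcomm⟩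
  have hcube : σ' ^ 3 = 1 := Subtype.ext hσ
  obtain ⟨k, hk⟩ :=
    mem_zpowers_of_central_of_pow_three_mem (fun h => hG (h.trans C.card_subgroup_dvd_card))
      ((Subgroup.orderOf_mk _ _).trans hτ) (mk_mem_center_centralizer τ) (hcube ▸ one_mem _)
  exact ⟨k, congrArg Subtype.val hk⟩

/- Inversion and conjugation by `τ` act without fixed points on these elements. -/
theorem six_dvd_card_pow_three_eq_one_notMem_zpowers {τ : G} (hG : ¬ 9 ∣ Nat.card G)
    (hτ : orderOf τ = 3) {T : Finset G}
    (mem_T : ∀ {g}, g ∈ T ↔ g ^ 3 = 1 ∧ g ∉ Subgroup.zpowers τ) : 6 ∣ T.card := by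
  have : Fact (Nat.Prime 3) := ⟨Nat.prime_three⟩
  have hcube : τ ^ 3 = 1 := hτ ▸ pow_orderOf_eq_one τ
  have htwo : 2 ∣ T.card := by
    refine prime_dvd_card_of_iterate_eq 2 (f := (·⁻¹)) (fun g hg => ?_)
      (fun g _ => inv_inv g) (fun g hg hfix => ?_)
    · rw [Finset.mem_coe, mem_T] at hg ⊢
      rwa [inv_pow, inv_eq_one, inv_mem_iff]
    · obtain ⟨hg3, hgτ⟩ := mem_T.1 hg
      have hsq : g ^ 2 = 1 := by rw [sq, mul_eq_one_iff_inv_eq, hfix]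
      rw [pow_succ, hsq, one_mul] at hg3
      exact hgτ (hg3 ▸ one_mem _)
  have hthree : 3 ∣ T.card := by
    refine prime_dvd_card_of_iterate_eq 3 (f := fun g => τ * g * τ⁻¹) (fun g hg => ?_)
      (fun g _ => ?_) (fun g hg hfix => ?_)
    · rw [Finset.mem_coe, mem_T] at hg ⊢
      have hτmem := Subgroup.mem_zpowers τ
      rwa [conj_pow, conj_eq_one_iff, Subgroup.mul_mem_cancel_right _ (inv_mem hτmem),
        Subgroup.mul_mem_cancel_left _ hτmem]
    · calc τ * (τ * (τ * g * τ⁻¹) * τ⁻¹) * τ⁻¹ = τ ^ 3 * g * (τ ^ 3)⁻¹ := by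
            simp only [pow_succ, pow_zero, one_mul, mul_inv_rev, mul_assoc]
        _ = g := by rw [hcube, one_mul, inv_one, mul_one]
    · exact (mem_T.1 hg).2 (mem_zpowers_of_commute_of_pow_three_eq_one hG hτ (mem_T.1 hg).1
        (mul_inv_eq_iff_eq_mul.1 hfix).symm)
  omega

theorem nine_le_ncard_pow_three_eq_one [Finite G] {σ τ : G} (hG : ¬ 9 ∣ Nat.card G)
    (hτ : orderOf τ = 3) (hσ : σ ^ 3 = 1) (hne : σ ∉ Subgroup.zpowers τ) :
    9 ≤ {g : G | g ^ 3 = 1}.ncard := by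
  classical
  have := Fintype.ofFinite G
  let T : Finset G := {g | g ^ 3 = 1 ∧ g ∉ Subgroup.zpowers τ}
  have mem_T {g : G} : g ∈ T ↔ g ^ 3 = 1 ∧ g ∉ Subgroup.zpowers τ := Finset.mem_filter_univ g
  have hsix := six_dvd_card_pow_three_eq_one_notMem_zpowers hG hτ mem_T
  have hpos : 0 < T.card := Finset.card_pos.2 ⟨σ, mem_T.2 ⟨hσ, hne⟩⟩
  have hdisj : Disjoint (T : Set G) (Subgroup.zpowers τ) :=
    Set.disjoint_left.2 fun g hg => (mem_T.1 hg).2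
  have hsub : (T : Set G) ∪ Subgroup.zpowers τ ⊆ {g : G | g ^ 3 = 1} := by
    rintro g (hg | hg)
    · exact (mem_T.1 hg).1
    · exact orderOf_dvd_iff_pow_eq_one.1 (hτ ▸ orderOf_dvd_of_mem_zpowers hg)
  have hle := Set.ncard_le_ncard hsub
  rw [Set.ncard_union_eq hdisj, Set.ncard_coe_finset, ← Nat.card_coe_set_eq] at hle
  have hN : Nat.card (Subgroup.zpowers τ : Set G) = 3 := (Nat.card_zpowers τ).trans hτ
  omega

theorem card_le_two_mul_card_centralizer [Finite G] {τ : G}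
    (h : ∀ g : G, g * τ * g⁻¹ = τ ∨ g * τ * g⁻¹ = τ⁻¹) :
    Nat.card G ≤ 2 * Nat.card (Subgroup.centralizer {τ}) := by
  have horbit : (MulAction.orbit (ConjAct G) τ).ncard ≤ 2 := by
    refine (Set.ncard_le_ncard (t := {τ, τ⁻¹}) ?_ (Set.toFinite _)).trans
      ((Set.ncard_insert_le _ _).trans (by rw [Set.ncard_singleton]))
    rintro _ ⟨g, rfl⟩
    exact h (ConjAct.ofConjAct g)
  have hmul := (MulAction.stabilizer (ConjAct G) τ).index_mul_card
  rw [MulAction.index_stabilizer, ← Subgroup.nat_card_centralizer_nat_card_stabilizer] at hmul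
  calc Nat.card G = _ := hmul.symm
    _ ≤ _ := Nat.mul_le_mul_right _ horbit

end OrderThree

/-! ### Cycle leaves -/

/-- The third-point operation of a partial triple system: `t x y` is the third point of the triple
through `x` and `y`, and `t x y = y` when no triple contains both (in particular when `x = y`). -/
structure IsPartialSquag {V : Type*} (t : V → V → V) : Prop where
  idem (x : V) : t x x = x
  invol (x y : V) : t x (t x y) = y
  comm {x y : V} : t x y ≠ y → t y x = t x y

namespace IsPartialSquag

variable {V : Type*} {t : V → V → V} {x y z : V}

theorem injective (h : IsPartialSquag t) (x : V) : Function.Injective (t x) :=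
  (show Function.Involutive (t x) from h.invol x).injective

theorem apply_eq_iff (h : IsPartialSquag t) : t x y = z ↔ t x z = y :=
  ⟨fun e => e ▸ h.invol x y, fun e => e ▸ h.invol x z⟩

theorem apply_ne_left (h : IsPartialSquag t) (hxy : x ≠ y) : t x y ≠ x :=
  fun e => hxy (h.injective x ((h.idem x).trans e.symm))

theorem rotate (h : IsPartialSquag t) (hxy : t x y ≠ y) : t y (t x y) = x := by
  rw [← h.comm hxy, h.invol]

theorem apply_mem_block (h : IsPartialSquag t) (hxy : t x y ≠ y) {u v : V}
    (hu : u = x ∨ u = y ∨ u = t x y) (hv : v = x ∨ v = y ∨ v = t x y) :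
    t u v = x ∨ t u v = y ∨ t u v = t x y := by
  have hne : x ≠ y := by rintro rfl; exact hxy (h.idem x)
  have hyx : t y x = t x y := h.comm hxy
  have hyz : t y (t x y) = x := h.rotate hxy
  have hxz : t x (t x y) = y := h.invol x y
  have hzx : t (t x y) x = y := (h.comm (hxz.trans_ne hxy.symm)).trans hxz
  have hzy : t (t x y) y = x := (h.comm (hyz.trans_ne (h.apply_ne_left hne).symm)).trans hyz
  rcases hu with rfl | rfl | rfl <;> rcases hv with rfl | rfl | rfl <;>
    simp [h.idem, hyx, hyz, hxz, hzx, hzy]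

end IsPartialSquag

/-- The only pairs of distinct points not covered by a triple are the edges of the `4`-cycle
`a 0, a 1, a 2, a 3`. -/
structure HasCycleLeave {V : Type*} (t : V → V → V) (a : Fin 4 → V) : Prop
    extends IsPartialSquag t where
  injective_cycle : Function.Injective a
  leave_iff {x y : V} (hxy : x ≠ y) : t x y = y ↔ ∃ i, x = a i ∧ (y = a (i + 1) ∨ y = a (i + 3))

/-- `G` acts on the points by automorphisms of the third-point operation `t`. -/
def ActsByAut (G : Type*) {V : Type*} [Group G] [MulAction G V] (t : V → V → V) : Prop :=
  ∀ (g : G) (x y : V), g • t x y = t (g • x) (g • y)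

theorem ActsByAut.smul_apply_eq {G V : Type*} [Group G] [MulAction G V] {t : V → V → V}
    (hG : ActsByAut G t) {g : G} {x y : V} (hx : g • x = x) (hy : g • y = y) :
    g • t x y = t x y := by
  rw [hG, hx, hy]

theorem ActsByAut.subgroup {G V : Type*} [Group G] [MulAction G V] {t : V → V → V}
    (hG : ActsByAut G t) (K : Subgroup G) : ActsByAut K t :=
  fun g => hG g

/-- The set of points fixed by `g`. -/
abbrev fixedPts (V : Type*) [Fintype V] [DecidableEq V] {G : Type*} [SMul G V] (g : G) :
    Finset V :=
  {x | g • x = x}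

/-- `π` is a symmetry of the `4`-cycle `0, 1, 2, 3`. -/
abbrev IsSquareSymm (π : Equiv.Perm (Fin 4)) : Prop :=
  ∀ i, π (i + 1) = π i + 1 ∨ π (i + 1) = π i + 3

namespace IsSquareSymm

theorem apply_add_two : ∀ {π : Equiv.Perm (Fin 4)}, IsSquareSymm π → ∀ i, π (i + 2) = π i + 2 := by
  decide +kernel

theorem pow_four_eq_one : ∀ {π : Equiv.Perm (Fin 4)}, IsSquareSymm π → π ^ 4 = 1 := by
  decide +kernel

theorem card_eq_eight : Fintype.card {π : Equiv.Perm (Fin 4) // IsSquareSymm π} = 8 := by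
  decide +kernel

end IsSquareSymm

namespace HasCycleLeave

variable {V : Type*} {t : V → V → V} {a : Fin 4 → V} {x y : V}

theorem apply_cycle_of_ne (h : HasCycleLeave t a) {i j : Fin 4} (hij : j ≠ i + 2) :
    t (a i) (a j) = a j := by
  rcases eq_or_ne i j with rfl | hne
  · exact h.idem _
  · exact (h.leave_iff (h.injective_cycle.ne hne)).2
      ⟨i, rfl, by simp only [h.injective_cycle.eq_iff]; omega⟩

theorem apply_opp_ne (h : HasCycleLeave t a) (i : Fin 4) : t (a i) (a (i + 2)) ≠ a (i + 2) := by
  rw [Ne, h.leave_iff (h.injective_cycle.ne (by omega))]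
  rintro ⟨j, hj, hij⟩
  simp only [h.injective_cycle.eq_iff] at hj hij
  omega

theorem apply_opp_comm (h : HasCycleLeave t a) (i : Fin 4) :
    t (a (i + 2)) (a i) = t (a i) (a (i + 2)) :=
  h.comm (h.apply_opp_ne i)

theorem apply_opp_notMem_range (h : HasCycleLeave t a) (i : Fin 4) :
    t (a i) (a (i + 2)) ∉ Set.range a := by
  rintro ⟨j, hj⟩
  have hj' : t (a i) (a j) = a (i + 2) := by rw [hj, h.invol]
  rcases eq_or_ne j (i + 2) with rfl | hij
  · exact h.apply_opp_ne i hj'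
  · exact hij (h.injective_cycle ((h.apply_cycle_of_ne hij).symm.trans hj'))

theorem apply_cycle_notMem_range (h : HasCycleLeave t a) {i : Fin 4} (hx : x ∉ Set.range a)
    (hxi : x ≠ t (a i) (a (i + 2))) : t (a i) x ∉ Set.range a := by
  rintro ⟨j, hj⟩
  have hj' : t (a i) (a j) = x := h.apply_eq_iff.1 hj.symm
  rcases eq_or_ne j (i + 2) with rfl | hij
  · exact hxi hj'.symm
  · exact hx ⟨j, (h.apply_cycle_of_ne hij).symm.trans hj'⟩

theorem apply_ne_right (h : HasCycleLeave t a) (hx : x ∉ Set.range a) (hxy : x ≠ y) :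
    t x y ≠ y := by
  rw [Ne, h.leave_iff hxy]
  rintro ⟨i, rfl, -⟩
  exact hx ⟨i, rfl⟩

theorem comm_of_notMem_range (h : HasCycleLeave t a) (hx : x ∉ Set.range a) : t y x = t x y := by
  rcases eq_or_ne x y with rfl | hxy
  · rfl
  · exact h.comm (h.apply_ne_right hx hxy)

section Action

variable {G : Type*} [Group G] [MulAction G V]

theorem exists_squareSymm (h : HasCycleLeave t a) (hG : ActsByAut G t) (g : G) :
    ∃ π : Equiv.Perm (Fin 4), IsSquareSymm π ∧ ∀ i, g • a i = a (π i) := by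
  have step (i : Fin 4) :
      ∃ j, g • a i = a j ∧ (g • a (i + 1) = a (j + 1) ∨ g • a (i + 1) = a (j + 3)) :=
    (h.leave_iff ((MulAction.injective g).ne (h.injective_cycle.ne (by omega)))).1
      (by rw [← hG, h.apply_cycle_of_ne (by omega)])
  choose f hf hsucc using step
  have hinj : Function.Injective f := fun i j hij =>
    h.injective_cycle (smul_left_cancel g (by rw [hf, hf, hij]))
  refine ⟨Equiv.ofBijective f (Finite.injective_iff_bijective.1 hinj), fun i => ?_, hf⟩
  simp only [hf, h.injective_cycle.eq_iff] at hsucc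
  exact hsucc i

theorem mem_range_smul_iff (h : HasCycleLeave t a) (hG : ActsByAut G t) (g : G) :
    g • x ∈ Set.range a ↔ x ∈ Set.range a := by
  have key (g : G) {x : V} (hx : x ∈ Set.range a) : g • x ∈ Set.range a := by
    obtain ⟨i, rfl⟩ := hx
    obtain ⟨π, -, hπ⟩ := h.exists_squareSymm hG g
    exact ⟨π i, (hπ i).symm⟩
  exact ⟨fun hx => inv_smul_smul g x ▸ key g⁻¹ hx, key g⟩

theorem smul_cycle_eq_of_odd_pow_eq_one (h : HasCycleLeave t a) (hG : ActsByAut G t) {g : G}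
    {n : ℕ} (hn : Odd n) (hg : g ^ n = 1) (i : Fin 4) : g • a i = a i := by
  obtain ⟨π, hπ, hgπ⟩ := h.exists_squareSymm hG g
  have hpow (m : ℕ) (i : Fin 4) : g ^ m • a i = a ((π ^ m) i) := by
    induction m generalizing i with
    | zero => simp
    | succ m ih => rw [pow_succ, pow_succ, mul_smul, hgπ, ih, Equiv.Perm.mul_apply]
  have hπn : π ^ n = 1 := Equiv.ext fun i => h.injective_cycle (by rw [← hpow, hg, one_smul]; rfl)
  have hcop : n.Coprime (2 ^ 2) := (Nat.coprime_two_right.2 hn).pow_right 2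
  have hπ1 : orderOf π = 1 := Nat.eq_one_of_dvd_coprimes hcop
    (orderOf_dvd_of_pow_eq_one hπn) (orderOf_dvd_of_pow_eq_one hπ.pow_four_eq_one)
  rw [hgπ, orderOf_eq_one_iff.1 hπ1, Equiv.Perm.one_apply]

variable [Fintype V] [DecidableEq V]

theorem two_mul_card_fixedPts_lt (h : HasCycleLeave t a) (hG : ActsByAut G t) {g : G} {p : V}
    (hp : p ∉ Set.range a) (hg : g • p ≠ p) :
    2 * (fixedPts V g).card < Fintype.card V := by
  have hmaps : Set.MapsTo (t p) (fixedPts V g) ((fixedPts V g)ᶜ.erase p) := by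
    intro x hx
    have hgx : g • x = x := by simpa using hx
    have hpx : p ≠ x := by rintro rfl; exact hg hgx
    simp only [Finset.mem_coe, Finset.mem_erase, Finset.mem_compl, Finset.mem_filter_univ]
    refine ⟨h.apply_ne_left hpx, fun hfix => hg ?_⟩
    rw [← h.rotate (h.apply_ne_right hp hpx), hG, hgx, hfix]
  have hle := Finset.card_le_card_of_injOn (t p) hmaps (h.injective p).injOn
  have hpmem : p ∈ (fixedPts V g)ᶜ := by simpa using hg
  have hcard := Finset.card_add_card_compl (fixedPts V g)
  have hpos := Finset.card_pos.2 ⟨p, hpmem⟩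
  rw [Finset.card_erase_of_mem hpmem] at hle
  omega

end Action

end HasCycleLeave

namespace HasCycleLeave

variable {V : Type*} [Fintype V] {t : V → V → V} {a : Fin 4 → V}
  {G : Type*} [Group G] [MulAction G V]

theorem card_fixedPts_le_eight [DecidableEq V] (h : HasCycleLeave t a) (hG : ActsByAut G t)
    (hV : Fintype.card V = 17) {g : G} {p : V} (hp : p ∉ Set.range a) (hg : g • p ≠ p) :
    (fixedPts V g).card ≤ 8 := by
  have := h.two_mul_card_fixedPts_lt hG hp hg
  omega

/- Besides the cycle and `t (a 0) (a 2)`, the points `v`, `t (a 0) v` and `t (a 2) v` are fixed;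
as `t (a 0)` pairs off these further fixed points, there are at least four of them. -/
theorem nine_le_card_fixedPts [DecidableEq V] (h : HasCycleLeave t a) (hG : ActsByAut G t)
    {g : G} (hcycle : ∀ i, g • a i = a i) {v : V} (hv : v ∉ Set.range a) (hva : v ≠ t (a 0) (a 2))
    (hgv : g • v = v) : 9 ≤ (fixedPts V g).card := by
  let c := t (a 0) (a 2)
  let X := insert c (Finset.univ.image a)
  let S := fixedPts V g \ X
  have hX : X.card = 5 := by
    have hc : c ∉ Finset.univ.image a := by simpa using h.apply_opp_notMem_range 0
    rw [Finset.card_insert_of_notMem hc, Finset.card_image_of_injective _ h.injective_cycle,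
      Finset.card_univ, Fintype.card_fin]
  have hXfix : X ⊆ fixedPts V g := by
    simp only [X, Finset.insert_subset_iff, Finset.image_subset_iff, Finset.mem_filter_univ]
    exact ⟨hG.smul_apply_eq (hcycle 0) (hcycle 2), fun i _ => hcycle i⟩
  have mem_S {x : V} : x ∈ S ↔ g • x = x ∧ x ≠ c ∧ x ∉ Set.range a := by
    simp [S, X]
  have apply_mem {i : Fin 4} (hi : t (a i) (a (i + 2)) = c) {x : V} (hx : x ∈ S) :
      t (a i) x ∈ S := by
    obtain ⟨hgx, hxc, hxa⟩ := mem_S.1 hx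
    refine mem_S.2 ⟨hG.smul_apply_eq (hcycle i) hgx, ?_,
      h.apply_cycle_notMem_range hxa (hi ▸ hxc)⟩
    rw [← hi, (h.injective _).ne_iff]
    exact fun e => hxa ⟨_, e.symm⟩
  have apply_ne {x : V} (hx : x ∉ Set.range a) (i : Fin 4) : t (a i) x ≠ x := by
    rw [h.comm_of_notMem_range hx]
    exact h.apply_ne_left fun e => hx ⟨i, e.symm⟩
  have htwo : 2 ∣ S.card := prime_dvd_card_of_iterate_eq 2 (f := t (a 0))
    (fun x hx => apply_mem rfl hx) (fun x _ => h.invol _ x) fun x hx => apply_ne (mem_S.1 hx).2.2 0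
  have hthree : 3 ≤ S.card := by
    have hvS : v ∈ S := mem_S.2 ⟨hgv, hva, hv⟩
    refine Finset.two_lt_card.2 ⟨v, hvS, _, apply_mem (i := 0) rfl hvS, _,
      apply_mem (i := 2) (h.apply_opp_comm 0) hvS, (apply_ne hv 0).symm, (apply_ne hv 2).symm, ?_⟩
    rw [h.comm_of_notMem_range hv, h.comm_of_notMem_range hv, (h.injective v).ne_iff]
    exact h.injective_cycle.ne (by decide)
  have hadd := Finset.card_sdiff_add_card_eq_card hXfix
  change S.card + _ = _ at hadd
  omega

theorem eq_one_of_fixes_cycle [FaithfulSMul G V] (h : HasCycleLeave t a) (hG : ActsByAut G t)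
    (hV : Fintype.card V = 17) {g : G} (hcycle : ∀ i, g • a i = a i) {v : V}
    (hv : v ∉ Set.range a) (hva : v ≠ t (a 0) (a 2)) (hgv : g • v = v) : g = 1 := by
  classical
  refine eq_of_smul_eq_smul fun p : V => ?_
  rw [one_smul]
  by_contra hp
  have hpa : p ∉ Set.range a := by
    rintro ⟨i, rfl⟩
    exact hp (hcycle i)
  have hle := h.card_fixedPts_le_eight hG hV hpa hp
  have hge := h.nine_le_card_fixedPts hG hcycle hv hva hgv
  omega

theorem card_le_eight [FaithfulSMul G V] (h : HasCycleLeave t a) (hG : ActsByAut G t)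
    (hV : Fintype.card V = 17) (hne : t (a 1) (a 3) ≠ t (a 0) (a 2)) : Nat.card G ≤ 8 := by
  choose π hπ hgπ using h.exists_squareSymm hG
  have hinj : Function.Injective
      fun g => (⟨π g, hπ g⟩ : {π : Equiv.Perm (Fin 4) // IsSquareSymm π}) := by
    intro g₁ g₂ e
    have e : π g₁ = π g₂ := congrArg Subtype.val e
    have hcycle (i : Fin 4) : (g₁⁻¹ * g₂) • a i = a i := by
      rw [mul_smul, inv_smul_eq_iff, hgπ, hgπ, e]
    exact inv_mul_eq_one.1 (h.eq_one_of_fixes_cycle hG hV hcycle (h.apply_opp_notMem_range 1) hne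
      (hG.smul_apply_eq (hcycle 1) (hcycle 3)))
  have hle := Nat.card_le_card_of_injective _ hinj
  rwa [Nat.card_eq_fintype_card (α := {π // IsSquareSymm π}), IsSquareSymm.card_eq_eight] at hle

end HasCycleLeave

/-! ### Centred leaves -/

/-- A cycle leave whose two diagonals are completed to triples by the same point `o`. -/
structure HasCenteredLeave {V : Type*} (t : V → V → V) (a : Fin 4 → V) (o : V) : Prop
    extends HasCycleLeave t a where
  apply_opp (i : Fin 4) : t (a i) (a (i + 2)) = o

namespace HasCenteredLeave

variable {V : Type*} {t : V → V → V} {a : Fin 4 → V} {o : V} {x y f : V}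

theorem center_notMem_range (h : HasCenteredLeave t a o) : o ∉ Set.range a :=
  h.apply_opp 0 ▸ h.apply_opp_notMem_range 0

theorem smul_center {G : Type*} [Group G] [MulAction G V] (h : HasCenteredLeave t a o)
    (hG : ActsByAut G t) (g : G) : g • o = o := by
  obtain ⟨π, hπ, hgπ⟩ := h.exists_squareSymm hG g
  rw [← h.apply_opp 0, hG, hgπ, hgπ, hπ.apply_add_two, h.apply_opp, h.apply_opp]

variable [DecidableEq V]

/-- The subsystem formed by the leave cycle and its centre `o`. -/
def core (a : Fin 4 → V) (o : V) : Finset V :=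
  insert o (Finset.univ.image a)

theorem mem_core : x ∈ core a o ↔ x = o ∨ x ∈ Set.range a := by
  simp [core]

theorem center_mem_core : o ∈ core a o := mem_core.2 (.inl rfl)

theorem notMem_range_of_notMem_core (hx : x ∉ core a o) : x ∉ Set.range a :=
  fun hxa => hx (mem_core.2 (.inr hxa))

theorem card_core (h : HasCenteredLeave t a o) : (core a o).card = 5 := by
  rw [core, Finset.card_insert_of_notMem (by simpa using h.center_notMem_range),
    Finset.card_image_of_injective _ h.injective_cycle, Finset.card_univ, Fintype.card_fin]

theorem card_compl_core [Fintype V] (h : HasCenteredLeave t a o) (hV : Fintype.card V = 17) :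
    (core a o)ᶜ.card = 12 := by
  rw [Finset.card_compl, hV, h.card_core]

theorem apply_mem_core (h : HasCenteredLeave t a o) (hx : x ∈ core a o) (hy : y ∈ core a o) :
    t x y ∈ core a o := by
  have cycle_center (i : Fin 4) : t (a i) o = a (i + 2) := h.apply_eq_iff.1 (h.apply_opp i)
  rw [mem_core] at hx hy
  rcases hx with rfl | ⟨i, rfl⟩ <;> rcases hy with rfl | ⟨j, rfl⟩
  · exact (h.idem _).symm ▸ center_mem_core
  · rw [← h.comm_of_notMem_range h.center_notMem_range, cycle_center]
    exact mem_core.2 (.inr ⟨_, rfl⟩)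
  · exact mem_core.2 (.inr ⟨_, (cycle_center i).symm⟩)
  · rcases eq_or_ne j (i + 2) with rfl | hij
    · exact mem_core.2 (.inl (h.apply_opp i))
    · exact mem_core.2 (.inr ⟨j, (h.apply_cycle_of_ne hij).symm⟩)

theorem apply_core_notMem (h : HasCenteredLeave t a o) (hf : f ∈ core a o) (hx : x ∉ core a o) :
    t f x ∉ core a o :=
  fun hfx => hx (h.invol f x ▸ h.apply_mem_core hf hfx)

theorem comm_of_notMem_core (h : HasCenteredLeave t a o) (hx : x ∉ core a o) :
    t y x = t x y :=
  h.comm_of_notMem_range (notMem_range_of_notMem_core hx)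

theorem apply_ne_right_of_notMem_core (h : HasCenteredLeave t a o) (hx : x ∉ core a o)
    (hxy : x ≠ y) : t x y ≠ y :=
  h.apply_ne_right (notMem_range_of_notMem_core hx) hxy

theorem apply_core_ne (h : HasCenteredLeave t a o) (hf : f ∈ core a o) (hx : x ∉ core a o) :
    t f x ≠ x := by
  rw [h.comm_of_notMem_core hx]
  rintro e
  exact h.apply_ne_left (by rintro rfl; exact hx hf) e

theorem apply_mem_core_iff (h : HasCenteredLeave t a o) :
    t x y ∈ core a o ↔ y ∈ (core a o).image (t x) := by
  rw [Finset.mem_image]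
  exact ⟨fun hxy => ⟨_, hxy, h.invol x y⟩, fun ⟨f, hf, e⟩ => by rwa [← e, h.invol]⟩

section Action

variable {G : Type*} [Group G] [MulAction G V]

theorem smul_mem_core_iff (h : HasCenteredLeave t a o) (hG : ActsByAut G t) (g : G) :
    g • x ∈ core a o ↔ x ∈ core a o := by
  rw [mem_core, mem_core, h.mem_range_smul_iff hG, smul_eq_iff_eq_inv_smul, h.smul_center hG]

theorem smul_core_eq_of_odd_pow_eq_one (h : HasCenteredLeave t a o) (hG : ActsByAut G t) {g : G}
    {n : ℕ} (hn : Odd n) (hg : g ^ n = 1) (hf : f ∈ core a o) : g • f = f := by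
  rcases mem_core.1 hf with rfl | ⟨i, rfl⟩
  · exact h.smul_center hG g
  · exact h.smul_cycle_eq_of_odd_pow_eq_one hG hn hg i

variable [Fintype V] [FaithfulSMul G V]

theorem eq_one_of_fixes_cycle_of_fixes_outer (h : HasCenteredLeave t a o) (hG : ActsByAut G t)
    (hV : Fintype.card V = 17) {g : G} (hcycle : ∀ i, g • a i = a i) (hx : x ∉ core a o)
    (hgx : g • x = x) : g = 1 := by
  refine h.eq_one_of_fixes_cycle hG hV hcycle (notMem_range_of_notMem_core hx) ?_ hgx
  rintro rfl
  exact hx (mem_core.2 (.inl (h.apply_opp 0)))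

theorem eq_one_of_odd_of_fixes_outer (h : HasCenteredLeave t a o) (hG : ActsByAut G t)
    (hV : Fintype.card V = 17) {g : G} {n : ℕ} (hn : Odd n) (hg : g ^ n = 1)
    (hx : x ∉ core a o) (hgx : g • x = x) : g = 1 :=
  h.eq_one_of_fixes_cycle_of_fixes_outer hG hV
    (fun i => h.smul_cycle_eq_of_odd_pow_eq_one hG hn hg i) hx hgx

theorem exists_outer_smul_ne (h : HasCenteredLeave t a o) (hG : ActsByAut G t)
    (hV : Fintype.card V = 17) {g : G} (hg : g ≠ 1) : ∃ p ∉ core a o, g • p ≠ p := by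
  obtain ⟨x, hx⟩ : (core a o)ᶜ.Nonempty := Finset.card_pos.1 (by rw [h.card_compl_core hV]; decide)
  rw [Finset.mem_compl] at hx
  by_contra! hall
  refine hg (h.eq_one_of_fixes_cycle_of_fixes_outer hG hV (fun i => ?_) hx (hall x hx))
  have hi : a i ∈ core a o := mem_core.2 (.inr ⟨i, rfl⟩)
  have hxi := h.apply_core_notMem hi hx
  rw [h.comm_of_notMem_core hx] at hxi
  rw [← h.invol x (a i)]
  exact hG.smul_apply_eq (hall x hx) (hall _ hxi)

end Action

end HasCenteredLeave

namespace HasCenteredLeave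

variable {V : Type*} [Fintype V] [DecidableEq V] {t : V → V → V} {a : Fin 4 → V} {o : V} {x y : V}
  {G : Type*} [Group G] [MulAction G V]

theorem exists_six_fixed_outer (h : HasCenteredLeave t a o) (hG : ActsByAut G t) {g : G}
    (hx : x ∉ core a o) (hy : y ∉ core a o) (hxy : x ≠ y) (hz : t x y ∉ core a o)
    (hgx : g • x = x) (hgy : g • y = y) :
    ∃ U : Finset V, U.card = 6 ∧ (∀ u ∈ U, u ∉ core a o) ∧ U ⊆ fixedPts V g := by
  let B : Finset V := {x, y, t x y}
  have hne := h.apply_ne_right_of_notMem_core hx hxy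
  have hB : B.card = 3 := Finset.card_eq_three.2
    ⟨x, y, t x y, hxy, (h.apply_ne_left hxy).symm, hne.symm, rfl⟩
  have mem_B {u : V} : u ∈ B ↔ u = x ∨ u = y ∨ u = t x y := by simp [B]
  have outer {u : V} (hu : u ∈ B) : u ∉ core a o := by
    rcases mem_B.1 hu with rfl | rfl | rfl <;> assumption
  have fixed {u : V} (hu : u ∈ B) : g • u = u := by
    rcases mem_B.1 hu with rfl | rfl | rfl
    exacts [hgx, hgy, hG.smul_apply_eq hgx hgy]
  have hdisj : Disjoint B (B.image (t o)) := by
    refine Finset.disjoint_left.2 fun v hv hv' => ?_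
    obtain ⟨u, hu, rfl⟩ := Finset.mem_image.1 hv'
    have hou := h.apply_core_ne center_mem_core (outer hu)
    have hmem := mem_B.2 (h.apply_mem_block hne (mem_B.1 hu) (mem_B.1 hv))
    rw [h.rotate hou] at hmem
    exact outer hmem center_mem_core
  refine ⟨B ∪ B.image (t o), ?_, fun u hu => ?_, fun u hu => ?_⟩
  · rw [Finset.card_union_of_disjoint hdisj, Finset.card_image_of_injective _ (h.injective o), hB]
  · rcases Finset.mem_union.1 hu with hu | hu
    · exact outer hu
    · obtain ⟨v, hv, rfl⟩ := Finset.mem_image.1 hu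
      exact h.apply_core_notMem center_mem_core (outer hv)
  · rw [Finset.mem_filter_univ]
    rcases Finset.mem_union.1 hu with hu | hu
    · exact fixed hu
    · obtain ⟨v, hv, rfl⟩ := Finset.mem_image.1 hu
      exact hG.smul_apply_eq (h.smul_center hG g) (fixed hv)

theorem card_compl_fixedPts_of_involution [FaithfulSMul G V] (h : HasCenteredLeave t a o)
    (hG : ActsByAut G t) (hV : Fintype.card V = 17) {g : G} (hg : orderOf g = 2) {U : Finset V}
    (hU : U.card = 6) (hout : ∀ u ∈ U, u ∉ core a o) (hfix : U ⊆ fixedPts V g) :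
    (fixedPts V g)ᶜ.card = 10 := by
  have hsq (x : V) : g • g • x = x := by rw [← mul_smul, ← sq, ← hg, pow_orderOf_eq_one, one_smul]
  obtain ⟨p, hp, hgp⟩ := h.exists_outer_smul_ne hG hV (g := g) (by rintro rfl; simp at hg)
  have hle := h.card_fixedPts_le_eight hG hV (notMem_range_of_notMem_core hp) hgp
  have hge : (insert o U).card ≤ (fixedPts V g).card := Finset.card_le_card <|
    Finset.insert_subset (by simpa using h.smul_center hG g) hfix
  rw [Finset.card_insert_of_notMem fun ho => hout o ho center_mem_core, hU] at hge
  have htwo : 2 ∣ (fixedPts V g)ᶜ.card :=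
    prime_dvd_card_of_iterate_eq 2 (f := (g • ·)) (fun x hx => by simpa using hx)
      (fun x _ => hsq x) (fun x hx => by simpa using hx)
  have hadd := Finset.card_add_card_compl (fixedPts V g)
  omega

/- `z ↦ t u z` and `g` are commuting fixed-point-free involutions of the ten moved points, so they
agree at some `z`, that is `u = t z (g • z)`; but `z` and `g • z` produce the same `u`, and ten
points cannot produce six values in this way. -/
theorem not_involution_fixes_six_outer [FaithfulSMul G V] (h : HasCenteredLeave t a o)
    (hG : ActsByAut G t) (hV : Fintype.card V = 17) {g : G} (hg : orderOf g = 2) {U : Finset V}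
    (hU : U.card = 6) (hout : ∀ u ∈ U, u ∉ core a o) : ¬ U ⊆ fixedPts V g := by
  intro hfix
  have hM := h.card_compl_fixedPts_of_involution hG hV hg hU hout hfix
  have hsq (x : V) : g • g • x = x := by rw [← mul_smul, ← sq, ← hg, pow_orderOf_eq_one, one_smul]
  have mem_M {x : V} : x ∈ (fixedPts V g)ᶜ ↔ g • x ≠ x := by simp
  have smul_mem {x : V} (hx : x ∈ (fixedPts V g)ᶜ) : g • x ∈ (fixedPts V g)ᶜ := by simpa using hx
  obtain ⟨u, hu, hlt⟩ := Finset.exists_card_fiber_lt_of_card_lt_mul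
    (s := (fixedPts V g)ᶜ) (t := U) (f := fun z => t z (g • z)) (n := 2) (by omega)
  have hua := notMem_range_of_notMem_core (hout u hu)
  have hgu : g • u = u := by simpa using hfix hu
  have hne {z : V} (hz : z ∈ (fixedPts V g)ᶜ) : u ≠ z := by rintro rfl; exact mem_M.1 hz hgu
  obtain ⟨z, hz, hzu⟩ : ∃ z ∈ (fixedPts V g)ᶜ, t u z = g • z := by
    refine exists_eq_of_commuting_involutions (by omega) (fun z hz => ?_) (fun z hz => smul_mem hz)
      (fun z _ => h.invol u z) (fun z _ => hsq z) (fun z hz => h.apply_ne_right hua (hne hz))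
      (fun z hz => mem_M.1 hz) (fun z _ => by rw [hG, hgu])
    rw [Finset.mem_coe, mem_M, hG, hgu, (h.injective u).ne_iff]
    exact mem_M.1 hz
  have agree {z : V} (hz : z ∈ (fixedPts V g)ᶜ) (hzu : t u z = g • z) : t z (g • z) = u :=
    hzu ▸ h.rotate (h.apply_ne_right hua (hne hz))
  refine absurd hlt (not_lt.2 (Finset.one_lt_card.2 ⟨z, ?_, g • z, ?_, (mem_M.1 hz).symm⟩))
  · exact Finset.mem_filter.2 ⟨hz, agree hz hzu⟩
  · exact Finset.mem_filter.2 ⟨smul_mem hz, agree (smul_mem hz) (by rw [hsq, ← hzu, h.invol])⟩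

theorem not_involution_fixes_block [FaithfulSMul G V] (h : HasCenteredLeave t a o)
    (hG : ActsByAut G t) (hV : Fintype.card V = 17) {g : G} (hg : orderOf g = 2) (hx : x ∉ core a o)
    (hy : y ∉ core a o) (hxy : x ≠ y) (hz : t x y ∉ core a o) (hgx : g • x = x) : g • y ≠ y := by
  intro hgy
  obtain ⟨U, hU, hout, hfix⟩ := h.exists_six_fixed_outer hG hx hy hxy hz hgx hgy
  exact h.not_involution_fixes_six_outer hG hV hg hU hout hfix

theorem card_outer_mates (h : HasCenteredLeave t a o) (hV : Fintype.card V = 17)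
    (hx : x ∉ core a o) :
    ({y | y ≠ x ∧ y ∉ core a o ∧ t x y ∉ core a o} : Finset V).card = 6 := by
  have hcompl : ({y | y ≠ x ∧ y ∉ core a o ∧ t x y ∉ core a o} : Finset V) =
      (insert x (core a o ∪ (core a o).image (t x)))ᶜ := by
    ext y
    simp only [Finset.mem_filter_univ, h.apply_mem_core_iff, Finset.mem_compl, Finset.mem_insert,
      Finset.mem_union, not_or]
  have hdisj : Disjoint (core a o) ((core a o).image (t x)) := by
    refine Finset.disjoint_left.2 fun f hf hf' => ?_
    obtain ⟨e, he, rfl⟩ := Finset.mem_image.1 hf'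
    rw [← h.comm_of_notMem_core hx] at hf
    exact h.apply_core_notMem he hx hf
  have hmem : x ∉ core a o ∪ (core a o).image (t x) := by
    rw [Finset.mem_union, ← h.apply_mem_core_iff, h.idem, or_self]
    exact hx
  rw [hcompl, Finset.card_compl, Finset.card_insert_of_notMem hmem,
    Finset.card_union_of_disjoint hdisj, Finset.card_image_of_injective _ (h.injective x),
    h.card_core, hV]

end HasCenteredLeave

namespace HasCenteredLeave

variable {V : Type*} [Fintype V] {t : V → V → V} {a : Fin 4 → V} {o : V} {x y : V}
  {G : Type*} [Group G] [Finite G] [MulAction G V] [FaithfulSMul G V]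

section OuterPairs

variable [DecidableEq V]

theorem eq_one_of_fixes_outer (h : HasCenteredLeave t a o) (hG : ActsByAut G t)
    (hV : Fintype.card V = 17) (hx : x ∉ core a o) {X : Type*} [MulAction G X] {w : X}
    (hw : ∀ g : G, g • w = w → g • x = x) (hinv : ∀ g : G, orderOf g = 2 → g • w ≠ w) {g : G}
    (hg : g • w = w) : g = 1 := by
  refine eq_one_of_smul_eq_of_prime_order (fun k hk hkw => ?_) hg
  rcases hk.eq_two_or_odd' with h2 | hodd
  · exact hinv k h2 hkw
  · have hk1 := h.eq_one_of_odd_of_fixes_outer hG hV hodd (pow_orderOf_eq_one k) hx (hw k hkw)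
    exact hk.ne_one (orderOf_eq_one_iff.2 hk1)

theorem eq_one_of_fixes_block (h : HasCenteredLeave t a o) (hG : ActsByAut G t)
    (hV : Fintype.card V = 17) (hx : x ∉ core a o) (hy : y ∉ core a o) (hxy : x ≠ y)
    (hz : t x y ∉ core a o) {g : G} (hgx : g • x = x) (hgy : g • y = y) : g = 1 := by
  refine h.eq_one_of_fixes_outer hG hV hx (w := (x, y)) (fun k hk => congrArg Prod.fst hk)
    (fun k h2 hk => ?_) (Prod.ext hgx hgy)
  exact h.not_involution_fixes_block hG hV h2 hx hy hxy hz (congrArg Prod.fst hk)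
    (congrArg Prod.snd hk)

/-- The ordered pairs of distinct points whose triple is disjoint from the core. -/
def outerPairs (t : V → V → V) (a : Fin 4 → V) (o : V) : Finset (V × V) :=
  {p | p.1 ∉ core a o ∧ p.2 ≠ p.1 ∧ p.2 ∉ core a o ∧ t p.1 p.2 ∉ core a o}

theorem mem_outerPairs : (x, y) ∈ outerPairs t a o ↔
    x ∉ core a o ∧ y ≠ x ∧ y ∉ core a o ∧ t x y ∉ core a o :=
  Finset.mem_filter_univ _

theorem card_outerPairs (h : HasCenteredLeave t a o) (hV : Fintype.card V = 17) :
    (outerPairs t a o).card = 72 := by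
  have hfiber (x : V) (hx : x ∈ (core a o)ᶜ) :
      ((outerPairs t a o).filter (·.1 = x)).card = 6 := by
    rw [Finset.mem_compl] at hx
    refine Eq.trans (Eq.symm ?_) (h.card_outer_mates hV hx)
    refine Finset.card_nbij (x, ·) (fun y hy => ?_) (fun _ _ _ _ e => congrArg Prod.snd e) ?_
    · simpa [mem_outerPairs, hx] using hy
    · rintro ⟨_, y⟩ hp
      obtain ⟨hp', rfl⟩ := Finset.mem_filter.1 hp
      exact ⟨y, by simpa using (mem_outerPairs.1 hp').2, rfl⟩
  rw [Finset.card_eq_sum_card_fiberwise (f := Prod.fst) (t := (core a o)ᶜ)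
    fun p hp => Finset.mem_compl.2 (mem_outerPairs.1 hp).1,
    Finset.sum_const_nat hfiber, h.card_compl_core hV]

end OuterPairs

theorem card_dvd_seventyTwo (h : HasCenteredLeave t a o) (hG : ActsByAut G t)
    (hV : Fintype.card V = 17) : Nat.card G ∣ 72 := by
  classical
  rw [← h.card_outerPairs hV]
  refine card_dvd_card_of_free (fun g p hp => ?_) fun g p hp hgp => ?_
  · rw [← Prod.mk.eta (p := p), mem_outerPairs] at hp
    rwa [← Prod.mk.eta (p := p), Prod.smul_mk, mem_outerPairs, ← hG, h.smul_mem_core_iff hG,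
      h.smul_mem_core_iff hG, h.smul_mem_core_iff hG, (smul_left_cancel_iff g).ne]
  · obtain ⟨hx, hxy, hy, hz⟩ := mem_outerPairs.1 hp
    exact h.eq_one_of_fixes_block hG hV hx hy hxy.symm hz (congrArg Prod.fst hgp)
      (congrArg Prod.snd hgp)

theorem not_nine_dvd_card (h : HasCenteredLeave t a o) (hG : ActsByAut G t)
    (hV : Fintype.card V = 17) : ¬ 9 ∣ Nat.card G := by
  classical
  intro h9
  obtain ⟨S, hS⟩ := Sylow.exists_subgroup_card_pow_prime (G := G) 3 (n := 2) h9
  have hdvd : Nat.card S ∣ (core a o)ᶜ.card := by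
    refine card_dvd_card_of_free (fun g x hx => ?_) fun g x hx hgx => ?_
    · rw [Finset.mem_compl] at hx ⊢
      exact (h.smul_mem_core_iff hG (g : G)).not.2 hx
    · have hpow : (g : G) ^ 3 ^ 2 = 1 := by
        rw [← hS, ← Subgroup.coe_pow, pow_card_eq_one', Subgroup.coe_one]
      exact Subtype.ext (h.eq_one_of_odd_of_fixes_outer hG hV (by decide) hpow
        (Finset.mem_compl.1 hx) hgx)
  rw [hS, h.card_compl_core hV] at hdvd
  exact absurd hdvd (by decide)

end HasCenteredLeave

/-! ### Cyclic labellings -/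

/-- The points off the core of a centred leave, labelled by the residues modulo `12` in such a way
that the automorphism `c` acts by translation, with `c ^ 4` fixing the core pointwise. -/
structure IsCyclicLabelling {V G : Type*} [DecidableEq V] [Group G] [MulAction G V]
    (a : Fin 4 → V) (o : V) (c : G) (P : ℤ → V) : Prop where
  smul_apply (i : ℤ) : c • P i = P (i + 1)
  eq_iff {i j : ℤ} : P i = P j ↔ i ≡ j [ZMOD 12]
  notMem_core (i : ℤ) : P i ∉ HasCenteredLeave.core a o
  exists_eq {w : V} : w ∉ HasCenteredLeave.core a o → ∃ i, P i = w
  pow_four_smul_core {f : V} : f ∈ HasCenteredLeave.core a o → c ^ 4 • f = f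

namespace IsCyclicLabelling

open HasCenteredLeave

variable {V : Type*} [DecidableEq V] {t : V → V → V} {a : Fin 4 → V} {o f : V}
  {G : Type*} [Group G] [MulAction G V] {c : G} {P : ℤ → V} {i j k : ℤ}

theorem zpow_smul (hP : IsCyclicLabelling a o c P) (i j : ℤ) : c ^ i • P j = P (j + i) := by
  induction i with
  | zero => simp
  | succ i ih => rw [zpow_add_one, (Commute.self_zpow c i).symm.eq, mul_smul, ih, hP.smul_apply,
      add_assoc]
  | pred i ih =>
    rw [zpow_sub_one, ← (Commute.self_zpow c _).inv_left.eq, mul_smul, ih, inv_smul_eq_iff,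
      hP.smul_apply]
    congr 1
    ring

theorem apply_add (hP : IsCyclicLabelling a o c P) (hG : ActsByAut G t) (m : ℤ)
    (hij : t (P i) (P j) = P k) : t (P (i + m)) (P (j + m)) = P (k + m) := by
  rw [← hP.zpow_smul, ← hP.zpow_smul, ← hG, hij, hP.zpow_smul]

theorem apply_fixed_add (hP : IsCyclicLabelling a o c P) (hG : ActsByAut G t) {m : ℤ}
    (hf : c ^ m • f = f) (hij : t f (P i) = P j) : t f (P (i + m)) = P (j + m) := by
  rw [← hP.zpow_smul, ← hP.zpow_smul, ← hij, hG, hf]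

theorem apply_center (h : HasCenteredLeave t a o) (hG : ActsByAut G t)
    (hP : IsCyclicLabelling a o c P) (i : ℤ) : t o (P i) = P (i + 6) := by
  obtain ⟨j, hj⟩ := hP.exists_eq (h.apply_core_notMem center_mem_core (hP.notMem_core 0))
  have shift (m : ℤ) : t o (P (0 + m)) = P (j + m) :=
    hP.apply_fixed_add hG (h.smul_center hG _) hj.symm
  have hne := h.apply_core_ne center_mem_core (hP.notMem_core 0)
  rw [← hj, ne_eq, hP.eq_iff] at hne
  have hjj := shift j
  rw [zero_add, hj, h.invol, hP.eq_iff] at hjj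
  rw [← zero_add i, shift i, hP.eq_iff]
  simp only [Int.ModEq] at *
  omega

/-- The labels of the six points that share with `P 0` a translate of the triple labelled by
`0, 4, r`. -/
def mateLabels (r : ℤ) : Finset ℤ := {4, r, -4, r - 4, -r, 4 - r}

theorem mem_mateLabels {m r : ℤ} : m ∈ mateLabels r ↔
    m = 4 ∨ m = r ∨ m = -4 ∨ m = r - 4 ∨ m = -r ∨ m = 4 - r := by
  simp [mateLabels]

theorem card_mateLabels {r : ℤ} (hr : Odd r) : (mateLabels r).card = 6 := by
  obtain ⟨s, rfl⟩ := hr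
  unfold mateLabels
  repeat rw [Finset.card_insert_of_notMem <| by
    simp only [Finset.mem_insert, Finset.mem_singleton]
    omega]
  rw [Finset.card_singleton]

theorem exists_apply_mateLabel (h : HasCenteredLeave t a o) (hG : ActsByAut G t)
    (hP : IsCyclicLabelling a o c P) {m r : ℤ} (hτ : t (P 0) (P 4) = P r) (hm : m ∈ mateLabels r) :
    ∃ k, t (P 0) (P m) = P k := by
  have swap {i j : ℤ} (hij : t (P 0) (P i) = P j) : t (P 0) (P j) = P i := h.apply_eq_iff.1 hij
  have reflect {i j : ℤ} (hij : t (P 0) (P i) = P j) : t (P 0) (P (-i)) = P (j - i) := by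
    have := hP.apply_add hG (-i) hij
    rwa [h.comm_of_notMem_core (hP.notMem_core _), zero_add, add_neg_cancel, ← sub_eq_add_neg]
      at this
  rcases mem_mateLabels.1 hm with rfl | rfl | rfl | rfl | rfl | rfl
  exacts [⟨_, hτ⟩, ⟨_, swap hτ⟩, ⟨_, reflect hτ⟩, ⟨_, swap (reflect hτ)⟩, ⟨_, reflect (swap hτ)⟩,
    ⟨_, swap (reflect (swap hτ))⟩]

theorem apply_zero_two_mem_core [Fintype V] (h : HasCenteredLeave t a o) (hG : ActsByAut G t)
    (hV : Fintype.card V = 17) (hP : IsCyclicLabelling a o c P) {r : ℤ} (hr : Odd r)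
    (hτ : t (P 0) (P 4) = P r) : t (P 0) (P 2) ∈ core a o := by
  have hcard := card_mateLabels hr
  obtain ⟨s, hs⟩ := hr
  have hinj : Set.InjOn P (mateLabels r) := by
    intro i hi j hj hij
    rw [Finset.mem_coe, mem_mateLabels] at hi hj
    rw [hP.eq_iff, Int.ModEq] at hij
    omega
  have hmates : (mateLabels r).image P =
      ({y | y ≠ P 0 ∧ y ∉ core a o ∧ t (P 0) y ∉ core a o} : Finset V) := by
    refine Finset.eq_of_subset_of_card_le (fun y hy => ?_) ?_
    · obtain ⟨m, hm, rfl⟩ := Finset.mem_image.1 hy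
      obtain ⟨k, hk⟩ := hP.exists_apply_mateLabel h hG hτ hm
      rw [Finset.mem_filter_univ, hk, ne_eq, hP.eq_iff, Int.ModEq]
      rw [mem_mateLabels] at hm
      exact ⟨by omega, hP.notMem_core _, hP.notMem_core _⟩
    · rw [h.card_outer_mates hV (hP.notMem_core 0), Finset.card_image_of_injOn hinj, hcard]
  by_contra hcore
  have h2 : P 2 ∈ (mateLabels r).image P := by
    rw [hmates, Finset.mem_filter_univ, ne_eq, hP.eq_iff]
    exact ⟨by decide, hP.notMem_core 2, hcore⟩
  obtain ⟨m, hm, hm2⟩ := Finset.mem_image.1 h2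
  rw [hP.eq_iff, Int.ModEq] at hm2
  rw [mem_mateLabels] at hm
  omega

theorem exists_apply_one (h : HasCenteredLeave t a o) (hG : ActsByAut G t)
    (hP : IsCyclicLabelling a o c P) (hf : f ∈ core a o) (hf0 : t f (P 0) = P 2) :
    ∃ j, j % 4 = 3 ∧ t f (P 1) = P j := by
  have shift (n : ℤ) {i j : ℤ} (hij : t f (P i) = P j) : t f (P (i + 4 * n)) = P (j + 4 * n) := by
    have hstab : c ^ 4 ∈ MulAction.stabilizer G f := hP.pow_four_smul_core hf
    refine hP.apply_fixed_add hG ?_ hij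
    rw [zpow_mul, zpow_ofNat]
    exact MulAction.mem_stabilizer_iff.1 (zpow_mem hstab n)
  have hf2 : t f (P 2) = P 0 := h.apply_eq_iff.1 hf0
  obtain ⟨j, hj⟩ := hP.exists_eq (h.apply_core_notMem hf (hP.notMem_core 1))
  have hjf : t f (P j) = P 1 := h.apply_eq_iff.1 hj.symm
  have ne_one : ¬ j ≡ 1 [ZMOD 12] := fun e =>
    h.apply_core_ne hf (hP.notMem_core 1) (hj.symm.trans (hP.eq_iff.2 e))
  have shift_zero := shift (j / 4) hf0
  have shift_one := shift (j / 4) hj.symm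
  have shift_two := shift (j / 4) hf2
  refine ⟨j, ?_, hj.symm⟩
  obtain hj4 | hj4 | hj4 | hj4 : j % 4 = 0 ∨ j % 4 = 1 ∨ j % 4 = 2 ∨ j % 4 = 3 := by omega
  · rw [show 0 + 4 * (j / 4) = j by omega, hjf, hP.eq_iff, Int.ModEq] at shift_zero
    omega
  · rw [show 1 + 4 * (j / 4) = j by omega, hjf, hP.eq_iff] at shift_one
    simp only [Int.ModEq] at *
    omega
  · rw [show 2 + 4 * (j / 4) = j by omega, hjf, hP.eq_iff, Int.ModEq] at shift_two
    omega
  · exact hj4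

theorem apply_zero_ne_two_of_mem_core (h : HasCenteredLeave t a o) (hG : ActsByAut G t)
    (hP : IsCyclicLabelling a o c P) (hf : f ∈ core a o) : t f (P 0) ≠ P 2 := by
  intro hf0
  obtain ⟨j, hj4, hj⟩ := hP.exists_apply_one h hG hf hf0
  have mate {i k : ℤ} (hik : t f (P i) = P k) : t (P i) (P k) = f :=
    hik ▸ h.rotate (h.apply_core_ne hf (hP.notMem_core i))
  have hcf : c • f ≠ f := by
    intro hcf
    have hf2 : t f (P 2) = P 0 := h.apply_eq_iff.1 hf0
    have hstab : c ∈ MulAction.stabilizer G f := hcf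
    have hf2' := hP.apply_fixed_add hG (m := 2) (zpow_mem hstab 2) hf0
    rw [zero_add, hf2, hP.eq_iff] at hf2'
    exact absurd hf2' (by decide)
  have hsmul (i k : ℤ) : c • t (P i) (P k) = t (P (i + 1)) (P (k + 1)) := by
    rw [hG, hP.smul_apply, hP.smul_apply]
  obtain hj | hj | hj : t f (P 1) = P 3 ∨ t f (P 1) = P 7 ∨ t f (P 1) = P (-1) := by
    simp only [hj, hP.eq_iff, Int.ModEq]
    omega
  · apply hcf
    calc c • f = c • t (P 0) (P 2) := by rw [mate hf0]
      _ = t (P 1) (P 3) := hsmul 0 2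
      _ = f := mate hj
  · have ho : o = f := by
      rw [← mate hj, ← h.rotate (h.apply_core_ne center_mem_core (hP.notMem_core 1)),
        hP.apply_center h hG]
      rfl
    rw [← ho, hP.apply_center h hG, hP.eq_iff] at hf0
    exact absurd hf0 (by decide)
  · apply hcf
    calc c • f = c • t (P (-1)) (P 1) := by rw [h.comm_of_notMem_core (hP.notMem_core 1), mate hj]
      _ = t (P 0) (P 2) := hsmul (-1) 1
      _ = f := mate hf0

theorem not_odd_of_apply_zero_four [Fintype V] (h : HasCenteredLeave t a o) (hG : ActsByAut G t)
    (hV : Fintype.card V = 17) (hP : IsCyclicLabelling a o c P) {r : ℤ}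
    (hτ : t (P 0) (P 4) = P r) : ¬ Odd r := by
  intro hr
  refine hP.apply_zero_ne_two_of_mem_core h hG (hP.apply_zero_two_mem_core h hG hV hr hτ) ?_
  rw [h.comm_of_notMem_core (hP.notMem_core 0), h.invol]

end IsCyclicLabelling

section RegularOrbit

variable {G α : Type*} [Group G] [MulAction G α] {x : α}

theorem smul_eq_smul_iff_of_free (hfree : ∀ g : G, g • x = x → g = 1) {g k : G} :
    g • x = k • x ↔ g = k := by
  refine ⟨fun e => ?_, congrArg (· • x)⟩
  rw [← inv_smul_eq_iff, ← mul_smul] at e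
  exact (inv_mul_eq_one.1 (hfree _ e)).symm

theorem exists_smul_eq_of_free {s : Finset α} (hs : ∀ g : G, g • x ∈ s)
    (hfree : ∀ g : G, g • x = x → g = 1) (hcard : s.card = Nat.card G) (hpos : 0 < s.card) {y : α}
    (hy : y ∈ s) : ∃ g : G, g • x = y := by
  classical
  have : Finite G := Nat.finite_of_card_ne_zero (by omega)
  have := Fintype.ofFinite G
  have himage : Finset.univ.image (fun g : G => g • x) = s := by
    refine Finset.eq_of_subset_of_card_le (Finset.image_subset_iff.2 fun g _ => hs g) ?_
    rw [Finset.card_image_of_injective _ fun g k => (smul_eq_smul_iff_of_free hfree).1,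
      Finset.card_univ, hcard, Nat.card_eq_fintype_card]
  rw [← himage] at hy
  obtain ⟨g, -, hg⟩ := Finset.mem_image.1 hy
  exact ⟨g, hg⟩

end RegularOrbit

section OrderTwelve

variable {G : Type*} [Group G] {τ δ : G}

theorem orderOf_pow_three_eq_four (hcard : Nat.card G = 12) (hτ : orderOf τ = 3)
    (hcentral : τ ∈ Subgroup.center G) (hδ : δ ^ 2 ∉ Subgroup.zpowers τ) :
    orderOf (δ ^ 3) = 4 := by
  have := normal_zpowers_of_mem_center hcentral
  have hindex : (Subgroup.zpowers τ).index = 4 := by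
    have := (Subgroup.zpowers τ).index_mul_card
    rw [Nat.card_zpowers, hτ, hcard] at this
    omega
  have hδ4 : (δ ^ 4) ^ 3 = 1 := by
    have hmem : δ ^ 4 ∈ Subgroup.zpowers τ := hindex ▸ Subgroup.pow_index_mem _ δ
    rw [← hτ, ← Nat.card_zpowers, ← orderOf_dvd_iff_pow_eq_one]
    exact Subgroup.orderOf_dvd_natCard _ hmem
  have hδ6 : (δ ^ 3) ^ 2 ≠ 1 := fun e => hδ <|
    mem_zpowers_of_central_of_pow_three_mem (hcard ▸ by decide) hτ hcentral <| by
      rw [← pow_mul, mul_comm, pow_mul, e]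
      exact one_mem _
  refine orderOf_eq_prime_pow (p := 2) (n := 1) (by rwa [pow_one]) ?_
  rw [← pow_mul] at hδ4 ⊢
  exact hδ4

theorem exists_generator_of_central (hcard : Nat.card G = 12) (hτ : orderOf τ = 3)
    (hcentral : τ ∈ Subgroup.center G) (hδ : δ ^ 2 ∉ Subgroup.zpowers τ) :
    ∃ (c : G) (r : ℤ), orderOf c = 12 ∧ Odd r ∧ c ^ 4 = τ ∧ c ^ r = δ := by
  have hδ3 := orderOf_pow_three_eq_four hcard hτ hcentral hδ
  have hcomm : Commute (δ ^ 3) τ := Subgroup.mem_center_iff.1 hcentral _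
  have hc : orderOf (δ ^ 3 * τ) = 12 := by
    rw [hcomm.orderOf_mul_eq_mul_orderOf_of_coprime (by rw [hδ3, hτ]; decide), hδ3, hτ]
  have htop : Subgroup.zpowers (δ ^ 3 * τ) = ⊤ := by
    have : Finite G := Nat.finite_of_card_ne_zero (by omega)
    exact Subgroup.eq_top_of_card_eq _ (by rw [Nat.card_zpowers, hc, hcard])
  obtain ⟨r, hr⟩ : δ ∈ Subgroup.zpowers (δ ^ 3 * τ) := htop ▸ Subgroup.mem_top δ
  refine ⟨δ ^ 3 * τ, r, hc, ?_, ?_, hr⟩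
  · rw [← Int.not_even_iff_odd]
    rintro ⟨s, rfl⟩
    have hδ6 : (δ ^ 3) ^ 2 = 1 := by
      rw [← hr, ← zpow_natCast, ← zpow_natCast, ← zpow_mul, ← zpow_mul,
        ← orderOf_dvd_iff_zpow_eq_one, hc]
      exact ⟨s, by push_cast; ring⟩
    exact absurd (hδ3 ▸ orderOf_dvd_of_pow_eq_one hδ6) (by decide)
  · calc (δ ^ 3 * τ) ^ 4 = (δ ^ 3) ^ 4 * (τ ^ 3 * τ) := by rw [hcomm.mul_pow, pow_succ τ 3]
      _ = τ := by rw [← hδ3, pow_orderOf_eq_one, ← hτ, pow_orderOf_eq_one, one_mul, one_mul]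

end OrderTwelve

/-- The triple through `z` and `g • z` has third point `k • z`. -/
def IsOrbitTriple {V G : Type*} [SMul G V] (t : V → V → V) (z : V) (g k : G) : Prop :=
  t z (g • z) = k • z

namespace IsOrbitTriple

variable {V : Type*} {t : V → V → V} {z : V} {G : Type*} [Group G] [MulAction G V] {g k l : G}

theorem symm (ht : IsPartialSquag t) (hgk : IsOrbitTriple t z g k) : IsOrbitTriple t z k g :=
  ht.apply_eq_iff.1 hgk

theorem translate (hG : ActsByAut G t) (hz : ∀ x, t x z = t z x)
    (hgk : IsOrbitTriple t z g k) : IsOrbitTriple t z g⁻¹ (g⁻¹ * k) := by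
  rw [IsOrbitTriple, mul_smul, ← hgk, hG, inv_smul_smul, hz]

theorem unique (hfree : ∀ g : G, g • z = z → g = 1) (hgk : IsOrbitTriple t z g k)
    (hgl : IsOrbitTriple t z g l) : k = l :=
  (smul_eq_smul_iff_of_free hfree).1 (Eq.trans (Eq.symm hgk) hgl)

theorem rotate (ht : IsPartialSquag t) (hG : ActsByAut G t) (hz : ∀ x, t x z = t z x)
    (hgk : IsOrbitTriple t z g k) : IsOrbitTriple t z (g⁻¹ * k) g⁻¹ :=
  (hgk.translate hG hz).symm ht

theorem mem_zpowers_third (ht : IsPartialSquag t) (hfree : ∀ g : G, g • z = z → g = 1)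
    (hg : orderOf g = 3) (hgg : IsOrbitTriple t z g g⁻¹) (hk : k ∈ Subgroup.zpowers g)
    (hkl : IsOrbitTriple t z k l) : l ∈ Subgroup.zpowers g := by
  have hone : IsOrbitTriple t z (1 : G) 1 := by rw [IsOrbitTriple, one_smul, ht.idem]
  rcases (mem_zpowers_iff_of_orderOf_eq_three hg).1 hk with rfl | rfl | rfl
  · exact hkl.unique hfree hone ▸ one_mem _
  · exact hkl.unique hfree hgg ▸ inv_mem (Subgroup.mem_zpowers _)
  · exact hkl.unique hfree (hgg.symm ht) ▸ Subgroup.mem_zpowers _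

theorem exists_rotation (hfree : ∀ g : G, g • z = z → g = 1) :
    ∃ r : V → V, ∀ g k : G, IsOrbitTriple t z g k → r (g • z) = (g⁻¹ * k) • z := by
  let label : V → G := Function.invFun (· • z)
  have hlabel (g : G) : label (g • z) = g :=
    Function.leftInverse_invFun (fun _ _ => (smul_eq_smul_iff_of_free hfree).1) g
  refine ⟨fun y => (label y)⁻¹ • t z y, fun g k hgk => by
    change (label (g • z))⁻¹ • t z (g • z) = (g⁻¹ * k) • z
    rw [hlabel, hgk, mul_smul]⟩

end IsOrbitTriple

namespace HasCenteredLeave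

variable {V : Type*} {t : V → V → V} {a : Fin 4 → V} {o z : V}
  {G : Type*} [Group G] [MulAction G V] {τ δ : G}

section OuterOrbit

variable [DecidableEq V]

theorem smul_ne_of_orderOf_eq_three [Fintype V] [FaithfulSMul G V] (h : HasCenteredLeave t a o)
    (hG : ActsByAut G t) (hV : Fintype.card V = 17) (hτ : orderOf τ = 3) (hz : z ∉ core a o) :
    τ • z ≠ z := by
  intro e
  have hτ1 := h.eq_one_of_odd_of_fixes_outer hG hV (by decide) (hτ ▸ pow_orderOf_eq_one τ) hz e
  rw [hτ1, orderOf_one] at hτ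
  exact absurd hτ (by decide)

theorem apply_smul_notMem_core [Fintype V] [FaithfulSMul G V] (h : HasCenteredLeave t a o)
    (hG : ActsByAut G t) (hV : Fintype.card V = 17) (hτ : orderOf τ = 3) (hz : z ∉ core a o) :
    t z (τ • z) ∉ core a o := by
  intro hcore
  have hτz := h.smul_ne_of_orderOf_eq_three hG hV hτ hz
  have hτ3 : τ ^ 3 = 1 := hτ ▸ pow_orderOf_eq_one τ
  have hτf : t (τ • z) (τ • τ • z) = t z (τ • z) := by
    rw [← hG, h.smul_core_eq_of_odd_pow_eq_one hG (by decide) hτ3 hcore]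
  have hτ2 : τ • τ • z = z := by
    rw [← h.invol (τ • z) (τ • τ • z), hτf,
      h.rotate (h.apply_ne_right_of_notMem_core hz hτz.symm)]
  apply hτz
  calc τ • z = τ • τ • τ • z := by rw [hτ2]
    _ = τ ^ 3 • z := by simp only [pow_succ, pow_zero, one_mul, mul_smul]
    _ = z := by rw [hτ3, one_smul]

theorem eq_one_of_fixes_outer_of_central [Fintype V] [Finite G] [FaithfulSMul G V]
    (h : HasCenteredLeave t a o) (hG : ActsByAut G t) (hV : Fintype.card V = 17)
    (hτ : orderOf τ = 3) (hcentral : τ ∈ Subgroup.center G) (hz : z ∉ core a o) {g : G}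
    (hg : g • z = z) : g = 1 := by
  refine h.eq_one_of_fixes_outer hG hV hz (fun _ hk => hk) (fun k h2 hk => ?_) hg
  refine h.not_involution_fixes_block hG hV h2 hz ((h.smul_mem_core_iff hG τ).not.2 hz)
    (h.smul_ne_of_orderOf_eq_three hG hV hτ hz).symm (h.apply_smul_notMem_core hG hV hτ hz) hk ?_
  rw [← mul_smul, Subgroup.mem_center_iff.1 hcentral, mul_smul, hk]

theorem exists_smul_eq_of_card_eq_twelve [Fintype V] (h : HasCenteredLeave t a o)
    (hG : ActsByAut G t) (hV : Fintype.card V = 17) (hcard : Nat.card G = 12) (hz : z ∉ core a o)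
    (hfree : ∀ g : G, g • z = z → g = 1) {w : V} (hw : w ∉ core a o) : ∃ g : G, g • z = w := by
  have hW := h.card_compl_core hV
  refine exists_smul_eq_of_free (s := (core a o)ᶜ)
    (fun g => Finset.mem_compl.2 ((h.smul_mem_core_iff hG g).not.2 hz)) hfree (hW.trans hcard.symm)
    (hW ▸ by decide) (Finset.mem_compl.2 hw)

theorem card_dvd_twelve_of_free [Fintype V] (h : HasCenteredLeave t a o) (hG : ActsByAut G t)
    (hV : Fintype.card V = 17) (hfree : ∀ z ∉ core a o, ∀ g : G, g • z = z → g = 1) :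
    Nat.card G ∣ 12 := by
  rw [← h.card_compl_core hV]
  refine card_dvd_card_of_free (fun g z hz => ?_) fun g z hz => hfree z (Finset.mem_compl.1 hz) g
  rw [Finset.mem_compl] at hz ⊢
  exact (h.smul_mem_core_iff hG g).not.2 hz

theorem exists_four_mates [Fintype V] (h : HasCenteredLeave t a o) (hG : ActsByAut G t)
    (hV : Fintype.card V = 17) (hτ : orderOf τ = 3) (hz : z ∉ core a o)
    (hfree : ∀ g : G, g • z = z → g = 1) (hττ : IsOrbitTriple t z τ τ⁻¹) :
    ∃ E : Finset V, E.card = 4 ∧ (∀ y ∈ E, y ∉ core a o ∧ t z y ∉ core a o) ∧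
      ∀ g : G, g • z ∈ E ↔ g ∉ Subgroup.zpowers τ ∧ t z (g • z) ∉ core a o := by
  have outer (g : G) : g • z ∉ core a o := (h.smul_mem_core_iff hG g).not.2 hz
  have inj {g k : G} : g • z = k • z ↔ g = k := smul_eq_smul_iff_of_free hfree
  have inj_one {g : G} : g • z = z ↔ g = 1 := by rw [← inj, one_smul]
  let M : Finset V := {y | y ≠ z ∧ y ∉ core a o ∧ t z y ∉ core a o}
  have mem_M {y : V} : y ∈ M ↔ y ≠ z ∧ y ∉ core a o ∧ t z y ∉ core a o :=
    Finset.mem_filter_univ y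
  have hτ1 : τ ≠ 1 := by rintro rfl; simp at hτ
  have hττ1 : τ ≠ τ⁻¹ := fun e => by
    have hsq : τ ^ 2 = 1 := by rw [sq, mul_eq_one_iff_eq_inv, ← e]
    exact absurd (hτ ▸ orderOf_dvd_of_pow_eq_one hsq) (by decide)
  have hsub : {τ • z, τ⁻¹ • z} ⊆ M := by
    rw [Finset.insert_subset_iff, Finset.singleton_subset_iff, mem_M, mem_M,
      show t z (τ • z) = τ⁻¹ • z from hττ, show t z (τ⁻¹ • z) = τ • z from hττ.symm h.1.1]
    simp [inj_one, hτ1, outer]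
  refine ⟨M \ {τ • z, τ⁻¹ • z}, ?_, fun y hy => ?_, fun g => ?_⟩
  · rw [Finset.card_sdiff_of_subset hsub, h.card_outer_mates hV hz,
      Finset.card_pair (inj.not.2 hττ1)]
  · exact (mem_M.1 (Finset.mem_sdiff.1 hy).1).2
  · rw [Finset.mem_sdiff, mem_M, Finset.mem_insert, Finset.mem_singleton, inj, inj, ne_eq, inj_one,
      mem_zpowers_iff_of_orderOf_eq_three hτ]
    have := outer g
    tauto

theorem not_isOrbitTriple_inv [Fintype V] (h : HasCenteredLeave t a o)
    (hG : ActsByAut G t) (hV : Fintype.card V = 17) (hcard : Nat.card G = 12) (hτ : orderOf τ = 3)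
    (hcentral : τ ∈ Subgroup.center G) (hz : z ∉ core a o)
    (hfree : ∀ g : G, g • z = z → g = 1) : ¬ IsOrbitTriple t z τ τ⁻¹ := by
  intro hττ
  have hcomm (x : V) : t x z = t z x := h.comm_of_notMem_core hz
  have inj {g k : G} : g • z = k • z ↔ g = k := smul_eq_smul_iff_of_free hfree
  obtain ⟨r, hr⟩ := IsOrbitTriple.exists_rotation (t := t) hfree
  obtain ⟨E, hE, hE_outer, mem_E⟩ := h.exists_four_mates hG hV hτ hz hfree hττ
  have exists_label (y : V) (hy : y ∈ E) :
      ∃ g k : G, g ∉ Subgroup.zpowers τ ∧ IsOrbitTriple t z g k ∧ g • z = y := by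
    obtain ⟨g, rfl⟩ := h.exists_smul_eq_of_card_eq_twelve hG hV hcard hz hfree (hE_outer y hy).1
    obtain ⟨k, hk⟩ := h.exists_smul_eq_of_card_eq_twelve hG hV hcard hz hfree (hE_outer _ hy).2
    exact ⟨g, k, ((mem_E g).1 hy).1, hk.symm, rfl⟩
  have hdvd : 3 ∣ E.card := by
    refine prime_dvd_card_of_iterate_eq 3 (f := r) ?_ ?_ ?_ <;> intro y hy <;>
      obtain ⟨g, k, hg, hgk, rfl⟩ := exists_label y hy <;> have hrot := hgk.rotate h.1.1 hG hcomm
    · rw [hr g k hgk, Finset.mem_coe, mem_E, show t z ((g⁻¹ * k) • z) = g⁻¹ • z from hrot]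
      exact ⟨fun hN => hg (inv_mem_iff.1 (hττ.mem_zpowers_third h.1.1 hfree hτ hN hrot)),
        (h.smul_mem_core_iff hG _).not.2 hz⟩
    · have hrot' := hrot.rotate h.1.1 hG hcomm
      change r (r (r (g • z))) = g • z
      rw [hr g k hgk, hr _ _ hrot, hr _ _ hrot', inj]
      group
    · intro hfix
      rw [hr g k hgk, inj] at hfix
      have hk : k = g⁻¹ := by
        rw [hfix] at hrot
        exact hgk.unique hfree hrot
      refine hg (mem_zpowers_of_commute_of_pow_three_eq_one (hcard ▸ by decide) hτ ?_
        (Subgroup.mem_center_iff.1 hcentral g))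
      rw [hk, ← mul_inv_rev, inv_eq_iff_mul_eq_one] at hfix
      rw [pow_succ, sq, hfix]
  rw [hE] at hdvd
  exact absurd hdvd (by decide)

theorem orbitTriple_third_notMem_zpowers [Fintype V] [FaithfulSMul G V]
    (h : HasCenteredLeave t a o) (hG : ActsByAut G t) (hV : Fintype.card V = 17)
    (hcard : Nat.card G = 12) (hτ : orderOf τ = 3) (hcentral : τ ∈ Subgroup.center G)
    (hz : z ∉ core a o) (hfree : ∀ g : G, g • z = z → g = 1) (hδ : IsOrbitTriple t z τ δ) :
    δ ∉ Subgroup.zpowers τ := by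
  have hτz : z ≠ τ • z := (h.smul_ne_of_orderOf_eq_three hG hV hτ hz).symm
  intro hmem
  rcases (mem_zpowers_iff_of_orderOf_eq_three hτ).1 hmem with rfl | rfl | rfl
  · exact h.apply_ne_left hτz (Eq.trans hδ (one_smul G z))
  · exact h.apply_ne_right_of_notMem_core hz hτz hδ
  · exact h.not_isOrbitTriple_inv hG hV hcard hτ hcentral hz hfree hδ

theorem orbitTriple_third_sq_notMem_zpowers (h : HasCenteredLeave t a o) (hG : ActsByAut G t)
    (hτ : orderOf τ = 3) (hz : z ∉ core a o) (hfree : ∀ g : G, g • z = z → g = 1)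
    (hδ : IsOrbitTriple t z τ δ) (hδN : δ ∉ Subgroup.zpowers τ) :
    δ ^ 2 ∉ Subgroup.zpowers τ := by
  have hcomm (x : V) : t x z = t z x := h.comm_of_notMem_core hz
  have hδτ : IsOrbitTriple t z δ τ := hδ.symm h.1.1
  have hδ' : IsOrbitTriple t z δ⁻¹ (δ⁻¹ * τ) := hδτ.translate hG hcomm
  have hτ2 : τ⁻¹ * τ⁻¹ = τ := by
    have hτ3 : τ ^ 3 = 1 := hτ ▸ pow_orderOf_eq_one τ
    rw [← mul_inv_rev, inv_eq_iff_mul_eq_one, ← sq, ← pow_succ, hτ3]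
  intro hmem
  rw [mem_zpowers_iff_of_orderOf_eq_three hτ, sq] at hmem
  rcases hmem with hsq | hsq | hsq
  · rw [inv_eq_of_mul_eq_one_left hsq] at hδ'
    have hδ1 : δ = 1 := by simpa using hδτ.unique hfree hδ'
    exact hδN (hδ1 ▸ one_mem _)
  · rw [← hsq, inv_mul_cancel_left] at hδ'
    have hδinv := hδτ.unique hfree (hδ'.symm h.1.1)
    exact hδN (inv_mem_iff.1 (hδinv ▸ Subgroup.mem_zpowers τ))
  · have hswap : τ⁻¹ * δ = δ⁻¹ * τ := by
      calc τ⁻¹ * δ = δ⁻¹ * (τ⁻¹ * τ⁻¹) := by rw [← hsq]; group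
        _ = δ⁻¹ * τ := by rw [hτ2]
    have hτδ := hδ.rotate h.1.1 hG hcomm
    rw [hswap] at hτδ
    exact hδN (inv_injective (hτδ.unique hfree (hδ'.symm h.1.1)) ▸ Subgroup.mem_zpowers τ)

theorem isCyclicLabelling [Fintype V] [FaithfulSMul G V] (h : HasCenteredLeave t a o)
    (hG : ActsByAut G t) (hV : Fintype.card V = 17) (hcard : Nat.card G = 12) {c : G}
    (hc : orderOf c = 12) (hz : z ∉ core a o) (hfree : ∀ g : G, g • z = z → g = 1) :
    IsCyclicLabelling a o c (fun i : ℤ => c ^ i • z) where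
  smul_apply i := by rw [← mul_smul, ← zpow_one_add, add_comm]
  eq_iff {i j} := by rw [smul_eq_smul_iff_of_free hfree, zpow_eq_zpow_iff_modEq, hc, Nat.cast_ofNat]
  notMem_core i := (h.smul_mem_core_iff hG _).not.2 hz
  exists_eq {w} hw := by
    have htop : Subgroup.zpowers c = ⊤ := by
      have : Finite G := Nat.finite_of_card_ne_zero (by omega)
      exact Subgroup.eq_top_of_card_eq _ (by rw [Nat.card_zpowers, hc, hcard])
    obtain ⟨g, rfl⟩ := h.exists_smul_eq_of_card_eq_twelve hG hV hcard hz hfree hw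
    obtain ⟨i, rfl⟩ : g ∈ Subgroup.zpowers c := htop ▸ Subgroup.mem_top g
    exact ⟨i, rfl⟩
  pow_four_smul_core {f} hf :=
    h.smul_core_eq_of_odd_pow_eq_one hG (n := 3) (by decide)
      (by rw [← pow_mul, ← orderOf_dvd_iff_pow_eq_one, hc]) hf

end OuterOrbit

theorem card_ne_twelve_of_central [Fintype V] [FaithfulSMul G V] (h : HasCenteredLeave t a o)
    (hG : ActsByAut G t) (hV : Fintype.card V = 17) (hτ : orderOf τ = 3)
    (hcentral : τ ∈ Subgroup.center G) : Nat.card G ≠ 12 := by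
  classical
  intro hcard
  have : Finite G := Nat.finite_of_card_ne_zero (by omega)
  obtain ⟨z, hz⟩ : (core a o)ᶜ.Nonempty := Finset.card_pos.1 (by rw [h.card_compl_core hV]; decide)
  rw [Finset.mem_compl] at hz
  have hfree (g : G) (hg : g • z = z) : g = 1 :=
    h.eq_one_of_fixes_outer_of_central hG hV hτ hcentral hz hg
  obtain ⟨δ, hδz⟩ := h.exists_smul_eq_of_card_eq_twelve hG hV hcard hz hfree
    (h.apply_smul_notMem_core hG hV hτ hz)
  have hδ : IsOrbitTriple t z τ δ := hδz.symm
  have hδN := h.orbitTriple_third_notMem_zpowers hG hV hcard hτ hcentral hz hfree hδ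
  have hδ2 := h.orbitTriple_third_sq_notMem_zpowers hG hτ hz hfree hδ hδN
  obtain ⟨c, r, hc, hr, hcτ, rfl⟩ :=
    exists_generator_of_central hcard hτ hcentral hδ2
  refine (h.isCyclicLabelling hG hV hcard hc hz hfree).not_odd_of_apply_zero_four h hG hV ?_ hr
  rw [zpow_zero, one_smul, zpow_ofNat, hcτ]
  exact hδ

end HasCenteredLeave

namespace HasCenteredLeave

variable {V : Type*} [Fintype V] {t : V → V → V} {a : Fin 4 → V} {o z : V}
  {G : Type*} [Group G] [Finite G] [MulAction G V] [FaithfulSMul G V] {τ σ : G}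

/- For each of the five points `f` of the core, the element of `G` taking `z` to `t f z` is an
involution. -/
theorem ncard_pow_three_eq_one_le_seven (h : HasCenteredLeave t a o) (hG : ActsByAut G t)
    (hV : Fintype.card V = 17) (hfix : ∀ (g : G) (i : Fin 4), g • a i = a i)
    (hcard : Nat.card G = 12) : {g : G | g ^ 3 = 1}.ncard ≤ 7 := by
  classical
  obtain ⟨z, hz⟩ : (core a o)ᶜ.Nonempty := Finset.card_pos.1 (by rw [h.card_compl_core hV]; decide)
  rw [Finset.mem_compl] at hz
  have hfree (g : G) (hg : g • z = z) : g = 1 :=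
    h.eq_one_of_fixes_cycle_of_fixes_outer hG hV (hfix g) hz hg
  have hcore (g : G) {f : V} (hf : f ∈ core a o) : g • f = f := by
    rcases mem_core.1 hf with rfl | ⟨i, rfl⟩
    exacts [h.smul_center hG g, hfix g i]
  have hex (f : V) : ∃ k : G, f ∈ core a o → k • z = t f z := by
    by_cases hf : f ∈ core a o
    · obtain ⟨k, hk⟩ := h.exists_smul_eq_of_card_eq_twelve hG hV hcard hz hfree
        (h.apply_core_notMem hf hz)
      exact ⟨k, fun _ => hk⟩
    · exact ⟨1, fun hf' => absurd hf' hf⟩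
  choose k hk using hex
  have hinj : Set.InjOn k (core a o) := fun f hf e he hfe => by
    apply h.injective z
    rw [← h.comm_of_notMem_core hz, ← h.comm_of_notMem_core hz, ← hk f hf, ← hk e he, hfe]
  have hfive : (k '' core a o).ncard = 5 := by
    rw [hinj.ncard_image, Set.ncard_coe_finset, h.card_core]
  have hdisj : Disjoint {g : G | g ^ 3 = 1} (k '' core a o) := by
    rw [Set.disjoint_right]
    rintro _ ⟨f, hf, rfl⟩ hcube
    have hsq : k f ^ 2 = 1 := hfree _ <| by
      rw [sq, mul_smul, hk f hf, hG, hcore _ hf, hk f hf, h.invol]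
    rw [Set.mem_ofPred_eq, pow_succ, hsq, one_mul] at hcube
    have hfz := hk f hf
    rw [hcube, one_smul] at hfz
    exact h.apply_core_ne hf hz hfz.symm
  have hunion := Set.ncard_le_card ({g : G | g ^ 3 = 1} ∪ k '' core a o)
  rw [Set.ncard_union_eq hdisj, hfive, hcard] at hunion
  omega

theorem mem_zpowers_of_pow_three_eq_one_of_fixes_cycle (h : HasCenteredLeave t a o)
    (hG : ActsByAut G t) (hV : Fintype.card V = 17)
    (hfix : ∀ (g : G) (i : Fin 4), g • a i = a i) (hτ : orderOf τ = 3) (hσ : σ ^ 3 = 1) :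
    σ ∈ Subgroup.zpowers τ := by
  classical
  by_contra hmem
  have hnine := nine_le_ncard_pow_three_eq_one (h.not_nine_dvd_card hG hV) hτ hσ hmem
  have hle : 9 ≤ Nat.card G := hnine.trans (Set.ncard_le_card _)
  have hdvd : Nat.card G ∣ 12 := h.card_dvd_twelve_of_free hG hV fun z hz g hg =>
    h.eq_one_of_fixes_cycle_of_fixes_outer hG hV (hfix g) hz hg
  have hcard : Nat.card G = 12 := (Nat.eq_of_dvd_of_lt_two_mul (by decide) hdvd (by omega)).symm
  have := h.ncard_pow_three_eq_one_le_seven hG hV hfix hcard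
  omega

theorem mem_zpowers_of_pow_three_eq_one (h : HasCenteredLeave t a o)
    (hG : ActsByAut G t) (hV : Fintype.card V = 17) (hτ : orderOf τ = 3) (hσ : σ ^ 3 = 1) :
    σ ∈ Subgroup.zpowers τ := by
  let K : Subgroup G := fixingSubgroup G (Set.range a)
  have hK {g : G} (hg : g ^ 3 = 1) : g ∈ K := (mem_fixingSubgroup_iff G).2 <| by
    rintro _ ⟨i, rfl⟩
    exact h.smul_cycle_eq_of_odd_pow_eq_one hG (by decide) hg i
  let τ' : K := ⟨τ, hK (hτ ▸ pow_orderOf_eq_one τ)⟩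
  let σ' : K := ⟨σ, hK hσ⟩
  obtain ⟨k, hk⟩ : σ' ∈ Subgroup.zpowers τ' :=
    h.mem_zpowers_of_pow_three_eq_one_of_fixes_cycle (hG.subgroup K) hV
      (fun g i => (mem_fixingSubgroup_iff G).1 g.2 (a i) ⟨i, rfl⟩)
      ((Subgroup.orderOf_mk _ _).trans hτ) (Subtype.ext hσ)
  exact ⟨k, congrArg Subtype.val hk⟩

theorem card_le_six_of_central (h : HasCenteredLeave t a o) (hG : ActsByAut G t)
    (hV : Fintype.card V = 17) (hτ : orderOf τ = 3) (hcentral : τ ∈ Subgroup.center G) :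
    Nat.card G ≤ 6 := by
  classical
  have hdvd : Nat.card G ∣ 12 := h.card_dvd_twelve_of_free hG hV fun z hz g hg =>
    h.eq_one_of_fixes_outer_of_central hG hV hτ hcentral hz hg
  have proper_divisor_le : ∀ m ∈ Nat.divisors 12, m ≠ 12 → m ≤ 6 := by decide
  exact proper_divisor_le _ (Nat.mem_divisors.2 ⟨hdvd, by decide⟩)
    (h.card_ne_twelve_of_central hG hV hτ hcentral)

theorem card_le_twelve (h : HasCenteredLeave t a o) (hG : ActsByAut G t)
    (hV : Fintype.card V = 17) : Nat.card G ≤ 12 := by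
  by_cases h3 : 3 ∣ Nat.card G
  · obtain ⟨τ, hτ⟩ := exists_prime_orderOf_dvd_card' 3 h3
    have hτ1 : τ ≠ 1 := by rintro rfl; simp at hτ
    let C := Subgroup.centralizer {τ}
    have hC : Nat.card C ≤ 6 := h.card_le_six_of_central (hG.subgroup C) hV
      ((Subgroup.orderOf_mk _ _).trans hτ) (mk_mem_center_centralizer τ)
    have hconj (g : G) : g * τ * g⁻¹ = τ ∨ g * τ * g⁻¹ = τ⁻¹ := by
      have hcube : (g * τ * g⁻¹) ^ 3 = 1 := by rw [conj_pow, ← hτ, pow_orderOf_eq_one]; simp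
      refine ((mem_zpowers_iff_of_orderOf_eq_three hτ).1
        (h.mem_zpowers_of_pow_three_eq_one hG hV hτ hcube)).resolve_left ?_
      rwa [conj_eq_one_iff]
    calc Nat.card G ≤ 2 * Nat.card C := card_le_two_mul_card_centralizer hconj
      _ ≤ 2 * 6 := by gcongr
  · have divisor_le : ∀ m ∈ Nat.divisors 72, ¬ 3 ∣ m → m ≤ 12 := by decide
    exact divisor_le _ (Nat.mem_divisors.2 ⟨h.card_dvd_seventyTwo hG hV, by decide⟩) h3

end HasCenteredLeave

theorem HasCycleLeave.card_le_twelve {V : Type*} [Fintype V] {t : V → V → V} {a : Fin 4 → V}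
    {G : Type*} [Group G] [Finite G] [MulAction G V] [FaithfulSMul G V]
    (h : HasCycleLeave t a) (hG : ActsByAut G t) (hV : Fintype.card V = 17) :
    Nat.card G ≤ 12 := by
  by_cases hdiag : t (a 1) (a 3) = t (a 0) (a 2)
  · have hc : HasCenteredLeave t a (t (a 0) (a 2)) := by
      refine ⟨h, fun i => ?_⟩
      fin_cases i
      · rfl
      · exact hdiag
      · exact h.apply_opp_comm 0
      · exact (h.apply_opp_comm 1).trans hdiag
    exact hc.card_le_twelve hG hV
  · exact (h.card_le_eight hG hV hdiag).trans (by decide)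

/-! ### The leave of a partial triple system -/

section EvenGraph

variable {V : Type*} [Fintype V] {Γ : SimpleGraph V} [DecidableRel Γ.Adj]

theorem three_mul_degree_le_sum_degrees (heven : ∀ x, Even (Γ.degree x)) (x : V) :
    3 * Γ.degree x ≤ ∑ y, Γ.degree y := by
  classical
  have two_le (y : V) (hy : y ∈ Γ.neighborFinset x) : 2 ≤ Γ.degree y := by
    have hpos := (Γ.degree_pos_iff_exists_adj y).2 ⟨x, (Γ.mem_neighborFinset _ _).1 hy |>.symm⟩
    obtain ⟨k, hk⟩ := heven y
    omega
  calc 3 * Γ.degree x = Γ.degree x + (Γ.neighborFinset x).card * 2 := by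
        rw [Γ.card_neighborFinset_eq_degree]; ring
    _ ≤ Γ.degree x + ∑ y ∈ Γ.neighborFinset x, Γ.degree y := by
        gcongr
        exact Finset.card_nsmul_le_sum _ _ _ two_le
    _ = ∑ y ∈ insert x (Γ.neighborFinset x), Γ.degree y := by
        rw [Finset.sum_insert (Γ.notMem_neighborFinset_self x)]
    _ ≤ ∑ y, Γ.degree y := Finset.sum_le_univ_sum_of_nonneg fun _ => Nat.zero_le _

theorem sum_degrees_ne_two (heven : ∀ x, Even (Γ.degree x)) : ∑ x, Γ.degree x ≠ 2 := by
  intro hsum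
  have hzero (x : V) : Γ.degree x = 0 := by
    have := three_mul_degree_le_sum_degrees heven x
    omega
  simp [hzero] at hsum

theorem neighborFinset_eq_pair [DecidableEq V] {x y z : V} (hx : Γ.degree x = 2) (hyz : y ≠ z)
    (hy : Γ.Adj x y) (hz : Γ.Adj x z) : Γ.neighborFinset x = {y, z} := by
  refine (Finset.eq_of_subset_of_card_le (fun w hw => ?_) ?_).symm
  · rw [Finset.mem_insert, Finset.mem_singleton] at hw
    rcases hw with rfl | rfl <;> simpa
  · rw [Γ.card_neighborFinset_eq_degree, hx, Finset.card_pair hyz]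

theorem exists_opposite_pair [DecidableEq V] {S : Finset V} (hS : S.card = 4)
    (mem_of_adj : ∀ {x y}, Γ.Adj x y → x ∈ S) (degree_eq : ∀ x ∈ S, Γ.degree x = 2) :
    ∃ x₀ x₁ x₂ x₃, S = {x₂, x₀, x₁, x₃} ∧ x₀ ≠ x₂ ∧ x₁ ≠ x₃ ∧
      Γ.neighborFinset x₀ = {x₁, x₃} ∧ Γ.neighborFinset x₂ = {x₁, x₃} := by
  have card_neighbors {x : V} (hx : x ∈ S) : (Γ.neighborFinset x).card = 2 :=
    (Γ.card_neighborFinset_eq_degree x).trans (degree_eq x hx)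
  obtain ⟨x₀, hx₀⟩ : S.Nonempty := Finset.card_pos.1 (by omega)
  obtain ⟨x₁, x₃, h13, hN₀⟩ := Finset.card_eq_two.1 (card_neighbors hx₀)
  have hadj {y : V} : Γ.Adj x₀ y ↔ y = x₁ ∨ y = x₃ := by
    rw [← Γ.mem_neighborFinset, hN₀, Finset.mem_insert, Finset.mem_singleton]
  have h01 : Γ.Adj x₀ x₁ := hadj.2 (.inl rfl)
  have h03 : Γ.Adj x₀ x₃ := hadj.2 (.inr rfl)
  have hsub : ({x₀, x₁, x₃} : Finset V) ⊆ S := by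
    simp [Finset.insert_subset_iff, hx₀, mem_of_adj h01.symm, mem_of_adj h03.symm]
  have hthree : ({x₀, x₁, x₃} : Finset V).card = 3 :=
    Finset.card_eq_three.2 ⟨_, _, _, h01.ne, h03.ne, h13, rfl⟩
  obtain ⟨x₂, hx₂, rfl⟩ := Finset.exists_eq_insert_iff.2 ⟨hsub, by rw [hthree, hS]⟩
  simp only [Finset.mem_insert, Finset.mem_singleton, not_or] at hx₂
  obtain ⟨h20, h21, h23⟩ := hx₂
  refine ⟨x₀, x₁, x₂, x₃, rfl, Ne.symm h20, h13, hN₀,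
    Finset.eq_of_subset_of_card_le (fun y hy => ?_) ?_⟩
  · rw [Γ.mem_neighborFinset] at hy
    have hyS := mem_of_adj hy.symm
    simp only [Finset.mem_insert, Finset.mem_singleton] at hyS ⊢
    rcases hyS with rfl | rfl | hy13
    · exact (Γ.irrefl hy).elim
    · exact ((hadj.1 hy.symm).elim h21 h23).elim
    · exact hy13
  · rw [card_neighbors (Finset.mem_insert_self _ _), Finset.card_pair h13]

theorem injective_of_adj_cycle {V : Type*} {Γ : SimpleGraph V} {a : Fin 4 → V}
    (hadj : ∀ i, Γ.Adj (a i) (a (i + 1))) (hdiag : ∀ i, a i ≠ a (i + 2)) :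
    Function.Injective a := by
  intro i j hij
  by_contra hne
  obtain rfl | rfl | rfl : j = i + 1 ∨ j = i + 2 ∨ i = j + 1 := by omega
  exacts [(hadj i).ne hij, hdiag i hij, (hadj j).ne hij.symm]

theorem exists_cycle_of_degree_eq_two {S : Finset V} (hS : S.card = 4)
    (mem_of_adj : ∀ {x y}, Γ.Adj x y → x ∈ S) (degree_eq : ∀ x ∈ S, Γ.degree x = 2) :
    ∃ a : Fin 4 → V, Function.Injective a ∧
      ∀ x y, Γ.Adj x y ↔ ∃ i, x = a i ∧ (y = a (i + 1) ∨ y = a (i + 3)) := by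
  classical
  obtain ⟨x₀, x₁, x₂, x₃, rfl, h02, h13, hN₀, hN₂⟩ := exists_opposite_pair hS mem_of_adj degree_eq
  have hadj₀ {y : V} : Γ.Adj x₀ y ↔ y = x₁ ∨ y = x₃ := by
    rw [← Γ.mem_neighborFinset, hN₀, Finset.mem_insert, Finset.mem_singleton]
  have hadj₂ {y : V} : Γ.Adj x₂ y ↔ y = x₁ ∨ y = x₃ := by
    rw [← Γ.mem_neighborFinset, hN₂, Finset.mem_insert, Finset.mem_singleton]
  have hN₁ : Γ.neighborFinset x₁ = {x₂, x₀} := neighborFinset_eq_pair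
    (degree_eq _ (by simp)) h02.symm (hadj₂.2 (.inl rfl)).symm (hadj₀.2 (.inl rfl)).symm
  have hN₃ : Γ.neighborFinset x₃ = {x₀, x₂} := neighborFinset_eq_pair
    (degree_eq _ (by simp)) h02 (hadj₀.2 (.inr rfl)).symm (hadj₂.2 (.inr rfl)).symm
  let a : Fin 4 → V := ![x₀, x₁, x₂, x₃]
  have hN (i : Fin 4) : Γ.neighborFinset (a i) = {a (i + 1), a (i + 3)} := by
    fin_cases i
    exacts [hN₀, hN₁, hN₂.trans (Finset.pair_comm _ _), hN₃]
  have hadj (i : Fin 4) {y : V} : Γ.Adj (a i) y ↔ y = a (i + 1) ∨ y = a (i + 3) := by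
    rw [← Γ.mem_neighborFinset, hN, Finset.mem_insert, Finset.mem_singleton]
  have hdiag (i : Fin 4) : a i ≠ a (i + 2) := by
    fin_cases i
    exacts [h02, h13, h02.symm, h13.symm]
  refine ⟨a, injective_of_adj_cycle (fun i => (hadj i).2 (.inl rfl)) hdiag,
    fun x y => ⟨fun hxy => ?_, ?_⟩⟩
  · obtain ⟨i, rfl⟩ : ∃ i, x = a i := by
      have hx := mem_of_adj hxy
      simp only [Finset.mem_insert, Finset.mem_singleton] at hx
      rcases hx with rfl | rfl | rfl | rfl
      exacts [⟨2, rfl⟩, ⟨0, rfl⟩, ⟨1, rfl⟩, ⟨3, rfl⟩]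
    exact ⟨i, rfl, (hadj i).1 hxy⟩
  · rintro ⟨i, rfl, hy⟩
    exact (hadj i).2 hy

theorem exists_cycle_of_sum_degrees_eq_eight (heven : ∀ x, Even (Γ.degree x))
    (hsum : ∑ x, Γ.degree x = 8) :
    ∃ a : Fin 4 → V, Function.Injective a ∧
      ∀ x y, Γ.Adj x y ↔ ∃ i, x = a i ∧ (y = a (i + 1) ∨ y = a (i + 3)) := by
  classical
  let S : Finset V := {x | Γ.degree x ≠ 0}
  have mem_S {x : V} : x ∈ S ↔ Γ.degree x ≠ 0 := by simp [S]
  have degree_eq (x : V) (hx : x ∈ S) : Γ.degree x = 2 := by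
    have := three_mul_degree_le_sum_degrees heven x
    obtain ⟨k, hk⟩ := heven x
    have := mem_S.1 hx
    omega
  have hS : S.card = 4 := by
    have : ∑ x ∈ S, Γ.degree x = 8 := hsum ▸ Finset.sum_filter_ne_zero _
    rw [Finset.sum_congr rfl degree_eq, Finset.sum_const, smul_eq_mul] at this
    omega
  exact exists_cycle_of_degree_eq_two hS
    (fun {x y} hxy => mem_S.2 ((Γ.degree_pos_iff_exists_adj x).2 ⟨y, hxy⟩).ne') degree_eq

end EvenGraph

/-- The leave of a partial triple system: the graph of the pairs covered by no triple. -/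
def leave {V : Type*} {t : V → V → V} (h : IsPartialSquag t) : SimpleGraph V where
  Adj x y := x ≠ y ∧ t x y = y
  symm := ⟨fun x y ⟨hxy, hy⟩ => ⟨hxy.symm, by
    by_contra hx
    exact hxy (h.injective y ((h.comm hx).symm.trans hy |>.trans (h.idem y).symm))⟩⟩
  loopless := ⟨fun _ hx => hx.1 rfl⟩

namespace IsPartialSquag

variable {V : Type*} [Fintype V] [DecidableEq V] {t : V → V → V}

instance (h : IsPartialSquag t) : DecidableRel (leave h).Adj :=
  fun x y => inferInstanceAs (Decidable (x ≠ y ∧ t x y = y))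

theorem even_degree_leave (h : IsPartialSquag t) (hV : Odd (Fintype.card V)) (x : V) :
    Even ((leave h).degree x) := by
  have hmoved : 2 ∣ (Finset.univ.filter fun y => ¬ t x y = y).card := by
    refine prime_dvd_card_of_iterate_eq 2 (f := t x) (fun y hy => ?_) (fun y _ => h.invol x y)
      fun y hy => by simpa using hy
    simp only [Finset.coe_filter_univ, Set.mem_ofPred_eq] at hy ⊢
    exact (h.injective x).ne hy
  have hfixed : Finset.univ.filter (fun y => t x y = y) =
      insert x ((leave h).neighborFinset x) := by
    ext y
    rw [Finset.mem_filter_univ, Finset.mem_insert, SimpleGraph.mem_neighborFinset]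
    rcases eq_or_ne y x with rfl | hyx
    · simp [h.idem]
    · simp [leave, hyx, hyx.symm]
  have hcount := Finset.card_filter_add_card_filter_not (s := Finset.univ) (fun y => t x y = y)
  rw [hfixed, Finset.card_insert_of_notMem (by simp), Finset.card_univ,
    SimpleGraph.card_neighborFinset_eq_degree] at hcount
  obtain ⟨k, hk⟩ := hmoved
  obtain ⟨l, hl⟩ := hV
  exact ⟨l - k, by omega⟩

theorem exists_hasCycleLeave (h : IsPartialSquag t) (hV : Odd (Fintype.card V))
    (hsum : ∑ x, (leave h).degree x = 8) : ∃ a, HasCycleLeave t a := by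
  obtain ⟨a, ha, hadj⟩ := exists_cycle_of_sum_degrees_eq_eight (h.even_degree_leave hV) hsum
  exact ⟨a, h, ha, fun {x y} hxy => (and_iff_right hxy).symm.trans (hadj x y)⟩

end IsPartialSquag

theorem isAuto.image_mem_iff {n : ℕ} {B : Finset (Finset (Fin n))} {φ : Equiv.Perm (Fin n)}
    (hφ : isAuto B φ) {T : Finset (Fin n)} : T.image φ ∈ B ↔ T ∈ B := by
  have hinj : Function.Injective (Finset.image φ) := Finset.image_injective φ.injective
  have himage : B.image (Finset.image φ) = B :=
    Finset.eq_of_subset_of_card_le (Finset.image_subset_iff.2 hφ)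
      (Finset.card_image_of_injective B hinj).ge
  refine ⟨fun hT => ?_, hφ T⟩
  rwa [← himage, hinj.mem_finset_image] at hT

/-- The automorphism group of a set of blocks. -/
def autGroup {n : ℕ} (B : Finset (Finset (Fin n))) : Subgroup (Equiv.Perm (Fin n)) where
  carrier := {φ | isAuto B φ}
  one_mem' T hT := by simpa using hT
  mul_mem' {φ ψ} hφ hψ T hT := by
    rw [Equiv.Perm.coe_mul, ← Finset.image_image]
    exact hφ _ (hψ T hT)
  inv_mem' {φ} hφ T hT := by
    rw [← isAuto.image_mem_iff hφ, Finset.image_image]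
    simpa using hT

open Classical in
/-- The third-point operation of a set `B` of triples, in the sense of `IsPartialSquag`. -/
noncomputable def thirdPoint {n : ℕ} (B : Finset (Finset (Fin n))) (x y : Fin n) : Fin n :=
  if h : ∃ z, {x, y, z} ∈ B then h.choose else y

namespace isPTS

variable {n : ℕ} {B : Finset (Finset (Fin n))} {x y z w : Fin n}

theorem ne_of_mem (hB : isPTS B) (h : {x, y, z} ∈ B) : x ≠ y ∧ x ≠ z ∧ y ≠ z := by
  have hcard := hB.1 _ h
  have pair_ne (u v : Fin n) : ({u, v} : Finset (Fin n)).card ≠ 3 :=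
    (Finset.card_le_two.trans_lt (by decide)).ne
  refine ⟨?_, ?_, ?_⟩ <;> rintro rfl
  · exact pair_ne x z (by simpa using hcard)
  · exact pair_ne y x (by simpa using hcard)
  · exact pair_ne x y (by simpa using hcard)

theorem eq_of_mem_of_mem (hB : isPTS B) (hz : {x, y, z} ∈ B) (hw : {x, y, w} ∈ B) : z = w := by
  obtain ⟨hxy, hxz, hyz⟩ := hB.ne_of_mem hz
  have heq := hB.2 {x, y} (Finset.card_pair hxy) _ hz _ hw (by simp [Finset.insert_subset_iff])
    (by simp [Finset.insert_subset_iff])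
  have hzw : z ∈ ({x, y, w} : Finset (Fin n)) := heq ▸ by simp
  simpa [hxz.symm, hyz.symm] using hzw

theorem exists_eq_of_mem (hB : isPTS B) {T : Finset (Fin n)} (hT : T ∈ B) (hx : x ∈ T) (hy : y ∈ T)
    (hxy : x ≠ y) : ∃ z, T = {x, y, z} := by
  have hyT : y ∈ T.erase x := Finset.mem_erase.2 ⟨hxy.symm, hy⟩
  obtain ⟨z, hz⟩ : ∃ z, (T.erase x).erase y = {z} := Finset.card_eq_one.1 <| by
    rw [Finset.card_erase_of_mem hyT, Finset.card_erase_of_mem hx, hB.1 T hT]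
  exact ⟨z, by rw [← hz, Finset.insert_erase hyT, Finset.insert_erase hx]⟩

theorem thirdPoint_eq (hB : isPTS B) (h : {x, y, z} ∈ B) : thirdPoint B x y = z := by
  have hex : ∃ z, {x, y, z} ∈ B := ⟨z, h⟩
  rw [thirdPoint, dif_pos hex]
  exact hB.eq_of_mem_of_mem hex.choose_spec h

theorem thirdPoint_ne_iff (hB : isPTS B) : thirdPoint B x y ≠ y ↔ ∃ z, {x, y, z} ∈ B := by
  refine ⟨fun h => ?_, fun ⟨z, hz⟩ => ?_⟩
  · by_contra hex
    exact h (dif_neg hex)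
  · rw [hB.thirdPoint_eq hz]
    exact (hB.ne_of_mem hz).2.2.symm

theorem isPartialSquag (hB : isPTS B) : IsPartialSquag (thirdPoint B) where
  idem x := by
    by_contra h
    obtain ⟨z, hz⟩ := hB.thirdPoint_ne_iff.1 h
    exact (hB.ne_of_mem hz).1 rfl
  invol x y := by
    by_cases h : thirdPoint B x y = y
    · rw [h, h]
    · obtain ⟨z, hz⟩ := hB.thirdPoint_ne_iff.1 h
      rw [hB.thirdPoint_eq hz]
      rw [Finset.pair_comm] at hz
      exact hB.thirdPoint_eq hz
  comm {x y} h := by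
    obtain ⟨z, hz⟩ := hB.thirdPoint_ne_iff.1 h
    rw [hB.thirdPoint_eq hz]
    rw [Finset.insert_comm] at hz
    exact hB.thirdPoint_eq hz

theorem card_offDiag_covered (hB : isPTS B) :
    ((Finset.univ : Finset (Fin n)).offDiag.filter fun p => thirdPoint B p.1 p.2 ≠ p.2).card =
      6 * B.card := by
  have hcover : (Finset.univ : Finset (Fin n)).offDiag.filter
      (fun p => thirdPoint B p.1 p.2 ≠ p.2) = B.biUnion Finset.offDiag := by
    ext ⟨x, y⟩
    simp only [Finset.mem_filter, Finset.mem_offDiag, Finset.mem_univ, true_and,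
      hB.thirdPoint_ne_iff, Finset.mem_biUnion]
    constructor
    · rintro ⟨hxy, z, hz⟩
      exact ⟨_, hz, by simp, by simp, hxy⟩
    · rintro ⟨T, hT, hx, hy, hxy⟩
      obtain ⟨z, rfl⟩ := hB.exists_eq_of_mem hT hx hy hxy
      exact ⟨hxy, z, hT⟩
  have hdisj : (B : Set (Finset (Fin n))).PairwiseDisjoint Finset.offDiag := by
    intro T hT S hS hne
    rw [Function.onFun, Finset.disjoint_left]
    rintro ⟨x, y⟩ hpT hpS
    rw [Finset.mem_offDiag] at hpT hpS
    exact hne (hB.2 {x, y} (Finset.card_pair hpT.2.2) T hT S hS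
      (by simp [Finset.insert_subset_iff, hpT]) (by simp [Finset.insert_subset_iff, hpS]))
  rw [hcover, Finset.card_biUnion hdisj, Finset.sum_congr rfl fun T hT => by
    rw [Finset.offDiag_card, hB.1 T hT], Finset.sum_const, smul_eq_mul, mul_comm]

theorem sum_degree_leave_add (hB : isPTS B) :
    ∑ x, (leave hB.isPartialSquag).degree x + 6 * B.card = n * (n - 1) := by
  have hdeg : ∑ x, (leave hB.isPartialSquag).degree x =
      ((Finset.univ : Finset (Fin n)).offDiag.filter
        fun p => ¬ thirdPoint B p.1 p.2 ≠ p.2).card := by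
    simp_rw [← SimpleGraph.card_neighborFinset_eq_degree, SimpleGraph.neighborFinset_eq_filter,
      Finset.card_filter, ← Fintype.sum_prod_type']
    rw [← Finset.card_filter, ← Finset.card_filter]
    congr 1
    ext ⟨x, y⟩
    rw [Finset.mem_filter_univ, Finset.mem_filter, Finset.mem_offDiag, not_not]
    simp [leave]
  rw [hdeg, ← hB.card_offDiag_covered, add_comm, Finset.card_filter_add_card_filter_not,
    Finset.offDiag_card, Finset.card_univ, Fintype.card_fin, Nat.mul_sub_one]

theorem card_le_fortyFour {B : Finset (Finset (Fin 17))} (hB : isPTS B) : B.card ≤ 44 := by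
  have hsum := hB.sum_degree_leave_add
  have hne := sum_degrees_ne_two (hB.isPartialSquag.even_degree_leave (by decide))
  omega

theorem actsByAut_autGroup (hB : isPTS B) : ActsByAut (autGroup B) (thirdPoint B) := by
  rintro ⟨φ, hφ⟩ x y
  have hmem {x y z : Fin n} : {φ x, φ y, φ z} ∈ B ↔ {x, y, z} ∈ B := by
    rw [← isAuto.image_mem_iff hφ (T := {x, y, z})]
    simp only [Finset.image_insert, Finset.image_singleton]
  change φ (thirdPoint B x y) = thirdPoint B (φ x) (φ y)
  by_cases h : thirdPoint B x y = y
  · rw [h]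
    by_contra hne
    obtain ⟨w, hw⟩ := hB.thirdPoint_ne_iff.1 (Ne.symm hne)
    refine hB.thirdPoint_ne_iff.2 ⟨φ.symm w, hmem.1 ?_⟩ h
    rwa [φ.apply_symm_apply]
  · obtain ⟨z, hz⟩ := hB.thirdPoint_ne_iff.1 h
    rw [hB.thirdPoint_eq hz, hB.thirdPoint_eq (hmem.2 hz)]

theorem card_autGroup_le_twelve {B : Finset (Finset (Fin 17))} (hB : isPTS B)
    (hcard : B.card = 44) : Nat.card (autGroup B) ≤ 12 := by
  have hsum := hB.sum_degree_leave_add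
  obtain ⟨a, ha⟩ := hB.isPartialSquag.exists_hasCycleLeave (by decide) (by omega)
  exact ha.card_le_twelve hB.actsByAut_autGroup (Fintype.card_fin 17)

end isPTS

/-! ### A system with twelve automorphisms -/

section BlockLists

variable {n : ℕ}

theorem nodup_of_pairwise_card_inter_le_one {F : List (Finset (Fin n))}
    (hcard : ∀ T ∈ F, T.card = 3) (hinter : F.Pairwise fun T S => (T ∩ S).card ≤ 1) : F.Nodup := by
  refine hinter.imp_of_mem fun {T S} hT _ hTS => ?_
  rintro rfl
  rw [Finset.inter_self, hcard T hT] at hTS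
  omega

theorem isPTS_toFinset {F : List (Finset (Fin n))} (hcard : ∀ T ∈ F, T.card = 3)
    (hinter : F.Pairwise fun T S => (T ∩ S).card ≤ 1) : isPTS F.toFinset := by
  refine ⟨fun T hT => hcard T (List.mem_toFinset.1 hT), fun p hp T hT S hS hpT hpS => ?_⟩
  by_contra hne
  have : Std.Symm fun T S : Finset (Fin n) => (T ∩ S).card ≤ 1 :=
    ⟨fun _ _ h => by rwa [Finset.inter_comm]⟩
  have hle : (T ∩ S).card ≤ 1 :=
    hinter.forall (List.mem_toFinset.1 hT) (List.mem_toFinset.1 hS) hne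
  have := Finset.card_le_card (Finset.subset_inter hpT hpS)
  omega

theorem isAuto_toFinset {L : List (List (Fin n))} {φ : Equiv.Perm (Fin n)}
    (h : ∀ l ∈ L, ∃ m ∈ L, (l.map φ).Perm m) : isAuto (L.map List.toFinset).toFinset φ := by
  intro T hT
  simp only [List.mem_toFinset, List.mem_map] at hT ⊢
  obtain ⟨l, hl, rfl⟩ := hT
  obtain ⟨m, hm, hperm⟩ := h l hl
  refine ⟨m, hm, ?_⟩
  rw [← List.toFinset_eq_of_perm _ _ hperm]
  ext x
  simp only [List.mem_toFinset, List.mem_map, Finset.mem_image]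

end BlockLists

/-- The blocks of a maximum partial triple system of order `17` with `12` automorphisms, as a list
of lists so that its properties can be decided by evaluation in the kernel. -/
def exampleTriples : List (List (Fin 17)) :=
  [[0, 1, 3], [0, 2, 5], [0, 4, 13], [0, 6, 12], [0, 7, 15], [0, 8, 14], [0, 9, 11],
   [0, 10, 16], [1, 2, 4], [1, 5, 13], [1, 6, 14], [1, 7, 12], [1, 8, 15], [1, 9, 10],
   [1, 11, 16], [2, 3, 13], [2, 6, 15], [2, 7, 14], [2, 8, 12], [2, 9, 16], [2, 10, 11],
   [3, 4, 8], [3, 5, 7], [3, 6, 16], [3, 9, 15], [3, 10, 12], [3, 11, 14], [4, 5, 6],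
   [4, 7, 16], [4, 9, 14], [4, 10, 15], [4, 11, 12], [5, 8, 16], [5, 9, 12], [5, 10, 14],
   [5, 11, 15], [6, 7, 11], [6, 8, 10], [6, 9, 13], [7, 8, 9], [7, 10, 13], [8, 11, 13],
   [12, 14, 16], [13, 15, 16]]

/-- The partial triple system with the triples `exampleTriples`. -/
def exampleBlocks : Finset (Finset (Fin 17)) :=
  (exampleTriples.map List.toFinset).toFinset

theorem card_eq_three_of_mem_exampleTriples :
    ∀ T ∈ exampleTriples.map List.toFinset, T.card = 3 := by
  have hlist : ∀ l ∈ exampleTriples, l.length = 3 ∧ l.Nodup := by decide +kernel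
  intro T hT
  obtain ⟨l, hl, rfl⟩ := List.mem_map.1 hT
  rw [List.toFinset_card_of_nodup (hlist l hl).2, (hlist l hl).1]

theorem pairwise_card_inter_exampleTriples_le_one :
    (exampleTriples.map List.toFinset).Pairwise fun T S => (T ∩ S).card ≤ 1 := by
  have hlist : exampleTriples.Pairwise fun l m => (l ∩ m).length ≤ 1 := by decide +kernel
  refine List.pairwise_map.2 (hlist.imp fun {l m} hlm => ?_)
  rw [← List.toFinset_inter]
  exact (List.toFinset_card_le _).trans hlm

theorem isPTS_exampleBlocks : isPTS exampleBlocks :=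
  isPTS_toFinset card_eq_three_of_mem_exampleTriples pairwise_card_inter_exampleTriples_le_one

theorem card_exampleBlocks : exampleBlocks.card = 44 :=
  List.toFinset_card_of_nodup
    (nodup_of_pairwise_card_inter_le_one card_eq_three_of_mem_exampleTriples
      pairwise_card_inter_exampleTriples_le_one)

/-- An automorphism of order `3` of the example. -/
def exampleRotation : Equiv.Perm (Fin 17) :=
  c[0, 1, 2] * c[3, 4, 5] * c[6, 7, 8] * c[9, 10, 11]

/-- An involutory automorphism of the example commuting with `exampleRotation`. -/
def exampleCentralInvolution : Equiv.Perm (Fin 17) :=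
  c[0, 7] * c[1, 8] * c[2, 6] * c[3, 9] * c[4, 10] * c[5, 11] * c[12, 14]

/-- An involutory automorphism of the example inverting `exampleRotation`. -/
def exampleReflection : Equiv.Perm (Fin 17) :=
  c[0, 8] * c[1, 7] * c[2, 6] * c[3, 9] * c[4, 11] * c[5, 10]

/-- The twelve automorphisms of the example, in normal form. -/
def exampleAut (i : Fin 3 × Fin 2 × Fin 2) : Equiv.Perm (Fin 17) :=
  exampleRotation ^ (i.1 : ℕ) * exampleCentralInvolution ^ (i.2.1 : ℕ) *
    exampleReflection ^ (i.2.2 : ℕ)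

theorem exampleAut_mem_autGroup (i : Fin 3 × Fin 2 × Fin 2) :
    exampleAut i ∈ autGroup exampleBlocks :=
  mul_mem (mul_mem (pow_mem (isAuto_toFinset (by decide +kernel)) _)
    (pow_mem (isAuto_toFinset (by decide +kernel)) _))
    (pow_mem (isAuto_toFinset (by decide +kernel)) _)

theorem injective_exampleAut : Function.Injective exampleAut := by
  have hinj : ∀ i j, exampleAut i = exampleAut j → i = j := by decide +kernel
  exact fun i j => hinj i j

theorem card_autGroup_exampleBlocks : Nat.card (autGroup exampleBlocks) = 12 := by
  refine le_antisymm (isPTS_exampleBlocks.card_autGroup_le_twelve card_exampleBlocks) ?_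
  have hle := Nat.card_le_card_of_injective
    (fun i => (⟨exampleAut i, exampleAut_mem_autGroup i⟩ : autGroup exampleBlocks))
    fun i j hij => injective_exampleAut (congrArg Subtype.val hij)
  simpa using hle

theorem mmpts17_aut_group_bounds :
    (∀ B : Finset (Finset (Fin 17)), isMMPTS B →
      Nat.card {φ : Equiv.Perm (Fin 17) // isAuto B φ} ≤ 12) ∧
    (∃ B : Finset (Finset (Fin 17)), isMMPTS B ∧
      Nat.card {φ : Equiv.Perm (Fin 17) // isAuto B φ} = 12) := by
  refine ⟨fun B hB => hB.1.card_autGroup_le_twelve (le_antisymm hB.1.card_le_fortyFour ?_),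
    exampleBlocks, ⟨isPTS_exampleBlocks, fun B' hB' => ?_⟩, card_autGroup_exampleBlocks⟩
  · exact card_exampleBlocks ▸ hB.2 _ isPTS_exampleBlocks
  · exact card_exampleBlocks ▸ hB'.card_le_fortyFour
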